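/- arXiv:1602.02451 — 4 statements merged into one kernel-verified Lean document; each statement's English description precedes it below -/
import Mathlib

section
/- Let θ₀ : ℝ⁺ → ℝ be twice continuously differentiable with compact support in ℝ⁺ = [0,∞) and ∂_y θ₀(0) = 0. Then there exist T > 0 and a solution θ of the model equation on the time interval [0,T) in the class θ ∈ C([0,T), C₀²(ℝ⁺)) ∩ C¹([0,T), C¹(ℝ⁺)) with ∂_y θ(0,t) = 0 for all t, satisfying the initial condition θ(·,0) = θ₀. -/
/-!
Local existence is proved in Lagrangian coordinates. Let `Φ(x,t)` be the flow map of `u`, with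
`Φ(x,0) = x`, and `φ = ∂ₓΦ`. Since `θ₀'(0) = 0`, one can write `θ₀'(x) = x k(x)` with `k`
continuous and compactly supported, and `Φ(x,t) = x A(x,t)` where `A(x,t) = ∫₀¹ φ(σx,t) dσ`.
Transporting `θ(Φ(x,t),t) = θ₀(x)` turns the velocity law into
`∂ᵧu(Φ(x,t),t) = ∫ₓ^∞ k/A dz`, in which the singularity at `0` has disappeared, and the problem
becomes `∂ₜφ = φ ∫ₓ^∞ k/A dz`, `φ(·,0) = 1`.

With `r(x,t) = ∫₀ᵗ 1/A(x,s) ds` and `J f(x) = ∫ₓ^∞ k f` this reads `φ = exp(J r)` and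
`∂ₜr = 1/A(exp(J r))`. The right-hand side is a smooth map of the Banach algebra `ℝ →ᵇ ℝ`:
averaging and `J` are bounded linear operators, and `exp` and inversion are smooth. Hence the
Picard–Lindelöf theorem applies (`exists_lagrangian`). The representation `φ = exp(J r)` also gives
`φ` a continuous spatial derivative and a positive lower bound.

So `Φ(·,t)` is a diffeomorphism with a jointly `C¹` inverse `X` (`exists_inverse_flow`), and
`θ(y,t) = G(X(y,t))` is the solution, where `G` is a `C²` extension of `θ₀` to the whole
line (`exists_extension`), so that no boundary point occurs in the construction.
-/

open Set MeasureTheory Filter Topology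

noncomputable def gD (g : ℝ → ℝ) (z : ℝ) : ℝ := derivWithin g (Set.Ici 0) z

noncomputable def Phi (φ : ℝ → ℝ → ℝ) (z t : ℝ) : ℝ := ∫ σ in (0:ℝ)..z, φ σ t

/-- Admissible data for the flow-map equation: `φ₀ ∈ C¹(ℝ⁺)`, `g ∈ C²(ℝ⁺)` with
compact support in `ℝ⁺`, `inf φ₀ > 0` and `g'(0) = 0`. -/
def AdmissibleData (φ₀ g : ℝ → ℝ) : Prop :=
  ContDiffOn ℝ 1 φ₀ (Set.Ici 0) ∧
  ContDiffOn ℝ 2 g (Set.Ici 0) ∧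
  (∃ a : ℝ, ∀ z ≥ a, g z = 0) ∧
  (∃ m : ℝ, 0 < m ∧ ∀ x ≥ (0:ℝ), m ≤ φ₀ x) ∧
  gD g 0 = 0

/-- `φ` is a `C¹(ℝ⁺ × I)` solution of the flow-map equation
`∂ₜφ(x,t) = φ(x,t) ∫_x^∞ g'(z)/Φ(z,t) dz`, `φ(x,0) = φ₀(x)`. -/
def IsFlowMapSolution (φ₀ g : ℝ → ℝ) (φ : ℝ → ℝ → ℝ) (I : Set ℝ) : Prop :=
  ContDiffOn ℝ 1 (fun p : ℝ × ℝ => φ p.1 p.2) (Set.Ici 0 ×ˢ I) ∧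
  (∀ x ≥ (0:ℝ), φ x 0 = φ₀ x) ∧
  (∀ x ≥ (0:ℝ), ∀ t ∈ I,
    HasDerivWithinAt (fun s => φ x s)
      (φ x t * ∫ z in Set.Ioi x, gD g z / Phi φ z t) I t)

/-- `inf_{(x,t) ∈ ℝ⁺ × I} φ(x,t) > 0`. -/
def PosInfOn (φ : ℝ → ℝ → ℝ) (I : Set ℝ) : Prop :=
  ∃ m : ℝ, 0 < m ∧ ∀ x ≥ (0:ℝ), ∀ t ∈ I, m ≤ φ x t
/-- Spatial derivative `∂_y θ(y,t)` (derivative within `ℝ⁺`). -/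
noncomputable def thetaY (θ : ℝ → ℝ → ℝ) (y t : ℝ) : ℝ :=
  derivWithin (fun w => θ w t) (Set.Ici 0) y

/-- The velocity field `u(y,t) = ∫_0^y (∫_{y'}^∞ ∂_z θ(z,t)/z dz) dy'`. -/
noncomputable def uVel (θ : ℝ → ℝ → ℝ) (y t : ℝ) : ℝ :=
  ∫ y' in (0:ℝ)..y, ∫ z in Set.Ioi y', thetaY θ z t / z

/-- `θ` solves the model equation `θ_t + u θ_y = 0` on `ℝ⁺ × I`. -/
def SolvesModel (θ : ℝ → ℝ → ℝ) (I : Set ℝ) : Prop :=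
  ∀ y ≥ (0:ℝ), ∀ t ∈ I,
    HasDerivWithinAt (fun s => θ y s) (-(uVel θ y t * thetaY θ y t)) I t

/-- The solution class `θ ∈ C(I, C₀²(ℝ⁺)) ∩ C¹(I, C¹(ℝ⁺))` with `∂_y θ(0,t) = 0`:
jointly `C¹`, spatially `C²` with compact support, with spatial derivatives up to order two
jointly continuous, and `∂_y θ(0,t) = 0`. -/
def InSolutionClass (θ : ℝ → ℝ → ℝ) (I : Set ℝ) : Prop :=
  ContDiffOn ℝ 1 (fun p : ℝ × ℝ => θ p.1 p.2) (Set.Ici 0 ×ˢ I) ∧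
  (∀ t ∈ I, ContDiffOn ℝ 2 (fun y => θ y t) (Set.Ici 0)) ∧
  (∀ t ∈ I, ∃ a : ℝ, ∀ y ≥ a, θ y t = 0) ∧
  ContinuousOn (fun p : ℝ × ℝ => thetaY θ p.1 p.2) (Set.Ici 0 ×ˢ I) ∧
  ContinuousOn (fun p : ℝ × ℝ => derivWithin (fun w => thetaY θ w p.2) (Set.Ici 0) p.1)
    (Set.Ici 0 ×ˢ I) ∧
  (∀ t ∈ I, thetaY θ 0 t = 0)

/-! ### Averages over segments and extension of the initial datum -/

/-- The average of `f` over the segment from `0` to `x`, that is `∫₀¹ f(σx) dσ`. -/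
noncomputable def segAvg (f : ℝ → ℝ) (x : ℝ) : ℝ := ∫ σ in (0:ℝ)..1, f (σ * x)

lemma mul_segAvg (f : ℝ → ℝ) (x : ℝ) : x * segAvg f x = ∫ s in (0:ℝ)..x, f s := by
  unfold segAvg
  rw [intervalIntegral.mul_integral_comp_mul_right]
  simp

lemma continuous_segAvg {f : ℝ → ℝ} (hf : Continuous f) : Continuous (segAvg f) := by
  unfold segAvg
  apply intervalIntegral.continuous_parametric_intervalIntegral_of_continuous'
  exact hf.comp (by fun_prop)

lemma hasDerivAt_mul_segAvg {f : ℝ → ℝ} (hf : Continuous f) (x : ℝ) :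
    HasDerivAt (fun x => x * segAvg f x) (f x) x := by
  simp_rw [mul_segAvg]
  exact intervalIntegral.integral_hasDerivAt_right (hf.intervalIntegrable _ _)
    hf.aestronglyMeasurable.stronglyMeasurableAtFilter hf.continuousAt

/-- A compactly supported `C²` function on `[0,∞)` with vanishing derivative at `0` is the
restriction of a `C²` function `G` on `ℝ` whose derivative is `x * k x` with `k` continuous and
compactly supported: extend the second derivative evenly and integrate twice. -/
lemma exists_extension (θ₀ : ℝ → ℝ)
    (hreg : ContDiffOn ℝ 2 θ₀ (Set.Ici 0))
    (hsupp : ∃ a : ℝ, ∀ y ≥ a, θ₀ y = 0)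
    (hder0 : derivWithin θ₀ (Set.Ici 0) 0 = 0) :
    ∃ (G E k : ℝ → ℝ) (a : ℝ), 0 < a ∧ Continuous E ∧ Continuous k ∧
      (∀ x, HasDerivAt G (x * k x) x) ∧ (∀ x, HasDerivAt (fun x => x * k x) (E x) x) ∧
      (∀ x, a ≤ |x| → k x = 0) ∧ (∀ x, 0 ≤ x → G x = θ₀ x) ∧ (∀ x, a ≤ x → G x = 0) := by
  obtain ⟨a₀, ha₀⟩ := hsupp
  have hU := uniqueDiffOn_Ici (0:ℝ)
  have h2 : ContDiffOn ℝ (1 + 1) θ₀ (Set.Ici 0) := by simpa [one_add_one_eq_two] using hreg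
  rw [contDiffOn_succ_iff_derivWithin hU] at h2
  obtain ⟨hd, -, h1⟩ := h2
  have h1' : ContDiffOn ℝ (0 + 1) (derivWithin θ₀ (Set.Ici 0)) (Set.Ici 0) := by simpa using h1
  rw [contDiffOn_succ_iff_derivWithin hU] at h1'
  obtain ⟨hd1, -, h0⟩ := h1'
  set g1 := derivWithin θ₀ (Set.Ici 0) with hg1
  set g2 := derivWithin g1 (Set.Ici 0) with hg2
  have hc2 : ContinuousOn g2 (Set.Ici 0) := h0.continuousOn
  set E : ℝ → ℝ := fun x => g2 |x| with hE
  have hEc : Continuous E :=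
    hc2.comp_continuous continuous_abs (fun x => abs_nonneg x)
  set k := segAvg E with hk
  have hkc : Continuous k := continuous_segAvg hEc
  have hxk : ∀ x, 0 ≤ x → x * k x = g1 x := by
    intro x hx
    rw [hk, mul_segAvg]
    have := intervalIntegral.integral_eq_sub_of_hasDerivAt_of_le hx (f := g1) (f' := E)
      (hd1.continuousOn.mono Icc_subset_Ici_self) (fun y hy => by
        have hy0 : 0 < y := hy.1
        have h := ((hd1 y hy0.le).hasDerivWithinAt).hasDerivAt (Ici_mem_nhds hy0)
        simpa [hE, abs_of_pos hy0] using h) (hEc.intervalIntegrable _ _)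
    rw [this, hder0, sub_zero]
  set K : ℝ → ℝ := fun x => x * k x with hK
  have hKc : Continuous K := continuous_id.mul hkc
  set G : ℝ → ℝ := fun x => θ₀ 0 + ∫ s in (0:ℝ)..x, K s with hG
  have hGe : ∀ x, 0 ≤ x → G x = θ₀ x := by
    intro x hx
    have := intervalIntegral.integral_eq_sub_of_hasDerivAt_of_le hx (f := θ₀) (f' := K)
      (hd.continuousOn.mono Icc_subset_Ici_self) (fun y hy => by
        have hy0 : 0 < y := hy.1
        have h := ((hd y hy0.le).hasDerivWithinAt).hasDerivAt (Ici_mem_nhds hy0)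
        have e : K y = g1 y := hxk y hy0.le
        rw [e]; exact h) (hKc.intervalIntegrable _ _)
    simp only [hG, this]; ring
  have keven : ∀ x, k |x| = k x := by
    intro x
    simp only [hk, segAvg, hE, abs_mul, abs_abs]
  refine ⟨G, E, k, |a₀| + 1, by positivity, hEc, hkc, ?_, hasDerivAt_mul_segAvg hEc, ?_, hGe, ?_⟩
  · intro x
    exact (intervalIntegral.integral_hasDerivAt_right (hKc.intervalIntegrable _ _)
      hKc.aestronglyMeasurable.stronglyMeasurableAtFilter hKc.continuousAt).const_add _
  · intro x hx
    have hp : 0 < |x| := lt_of_lt_of_le (by positivity) hx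
    have hg : g1 |x| = 0 := by
      have h := ((hd |x| hp.le).hasDerivWithinAt).hasDerivAt (Ici_mem_nhds hp)
      have hz : θ₀ =ᶠ[𝓝 |x|] fun _ => (0:ℝ) := by
        filter_upwards [lt_mem_nhds (show a₀ < |x| from by
          linarith [le_abs_self a₀])] with y hy
        exact ha₀ y hy.le
      exact h.unique ((hasDerivAt_const _ _).congr_of_eventuallyEq hz)
    have := hxk |x| hp.le
    rw [hg, keven] at this
    exact (mul_eq_zero.1 this).resolve_left hp.ne'
  · intro x hx
    have : 0 ≤ |a₀| := abs_nonneg _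
    rw [hGe x (by linarith)]
    exact ha₀ x (by linarith [le_abs_self a₀])

open scoped BoundedContinuousFunction

/-! ### Bounded operators on bounded continuous functions -/

/-- `segAvg` as a bounded operator on bounded continuous functions. -/
noncomputable def segAvgL : (ℝ →ᵇ ℝ) →L[ℝ] (ℝ →ᵇ ℝ) :=
  have bd : ∀ (f : ℝ →ᵇ ℝ) (x : ℝ), ‖segAvg f x‖ ≤ ‖f‖ := fun f x => by
    have := intervalIntegral.norm_integral_le_of_norm_le_const (a := 0) (b := 1)
      (f := fun σ : ℝ => f (σ * x)) (C := ‖f‖) (fun σ _ => f.norm_coe_le_norm _)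
    simpa [segAvg] using this
  LinearMap.mkContinuous
    { toFun := fun f => BoundedContinuousFunction.ofNormedAddCommGroup (segAvg f)
        (continuous_segAvg f.continuous) ‖f‖ (bd f)
      map_add' := fun f g => by
        ext x
        have hc : ∀ h : ℝ →ᵇ ℝ, Continuous fun σ : ℝ => h (σ * x) := fun h =>
          h.continuous.comp (by fun_prop)
        exact intervalIntegral.integral_add ((hc f).intervalIntegrable _ _)
          ((hc g).intervalIntegrable _ _)
      map_smul' := fun r f => by
        ext x
        exact intervalIntegral.integral_const_mul _ _ }
    1 (fun f => by
      rw [one_mul]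
      exact BoundedContinuousFunction.norm_ofNormedAddCommGroup_le _ (norm_nonneg f) (bd f))

@[simp] lemma segAvgL_apply (f : ℝ →ᵇ ℝ) (x : ℝ) : segAvgL f x = segAvg f x := rfl

/-- For integrable continuous `k`, the map `f ↦ (x ↦ ∫ₓᵃ k f)` is a bounded operator on bounded
continuous functions. -/
lemma exists_tailL (k : ℝ → ℝ) (hk : Continuous k) (hi : Integrable k) (a : ℝ) :
    ∃ J : (ℝ →ᵇ ℝ) →L[ℝ] (ℝ →ᵇ ℝ), ∀ f x, J f x = ∫ z in x..a, k z * f z := by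
  have hc : ∀ f : ℝ →ᵇ ℝ, Continuous fun z => k z * f z := fun f => hk.mul f.continuous
  have bd : ∀ (f : ℝ →ᵇ ℝ) (x : ℝ), ‖∫ z in x..a, k z * f z‖ ≤ (∫ z, ‖k z‖) * ‖f‖ := fun f x => by
    have hb : ∀ z, ‖k z * f z‖ ≤ ‖k z‖ * ‖f‖ := fun z => by
      rw [norm_mul]
      exact mul_le_mul_of_nonneg_left (f.norm_coe_le_norm z) (norm_nonneg _)
    have hi2 : Integrable fun z => ‖k z‖ * ‖f‖ := hi.norm.mul_const _
    have hi1 : Integrable fun z => k z * f z :=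
      hi2.mono' (hc f).aestronglyMeasurable (Eventually.of_forall hb)
    calc ‖∫ z in x..a, k z * f z‖ ≤ ∫ z in Set.uIoc x a, ‖k z * f z‖ :=
          intervalIntegral.norm_integral_le_integral_norm_uIoc
      _ ≤ ∫ z, ‖k z * f z‖ :=
          setIntegral_le_integral hi1.norm (Eventually.of_forall fun _ => norm_nonneg _)
      _ ≤ ∫ z, ‖k z‖ * ‖f‖ := integral_mono hi1.norm hi2 hb
      _ = _ := integral_mul_const _ _
  have cont : ∀ f : ℝ →ᵇ ℝ, Continuous fun x => ∫ z in x..a, k z * f z := fun f => by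
    simp_rw [intervalIntegral.integral_symm a]
    exact (intervalIntegral.continuous_primitive
      (fun u v => (hc f).intervalIntegrable u v) a).neg
  refine ⟨LinearMap.mkContinuous
    { toFun := fun f => BoundedContinuousFunction.ofNormedAddCommGroup
        (fun x => ∫ z in x..a, k z * f z) (cont f) _ (bd f)
      map_add' := fun f g => by
        ext x
        simp [mul_add]
        exact intervalIntegral.integral_add ((hc f).intervalIntegrable _ _)
          ((hc g).intervalIntegrable _ _)
      map_smul' := fun r f => by
        ext x
        simp [mul_left_comm] }
    (∫ z, ‖k z‖) (fun f => ?_), fun f x => rfl⟩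
  exact BoundedContinuousFunction.norm_ofNormedAddCommGroup_le _
    (mul_nonneg (integral_nonneg fun _ => norm_nonneg _) (norm_nonneg _)) (bd f)

/-! ### The flow-map equation as an ordinary differential equation -/

lemma exp_bcf_apply (f : ℝ →ᵇ ℝ) (x : ℝ) : NormedSpace.exp f x = Real.exp (f x) := by
  let ev : (ℝ →ᵇ ℝ) →+* ℝ :=
    { toFun := fun f => f x
      map_one' := rfl
      map_mul' := fun _ _ => rfl
      map_zero' := rfl
      map_add' := fun _ _ => rfl }
  have h := NormedSpace.map_exp ev (BoundedContinuousFunction.evalCLM ℝ x).continuous f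
  rw [Real.exp_eq_exp_ℝ]
  exact h

/-- A bounded continuous function bounded below by a positive constant is invertible. -/
lemma isUnit_bcf {f : ℝ →ᵇ ℝ} {c : ℝ} (hc : 0 < c) (hf : ∀ x, c ≤ f x) : IsUnit f := by
  rw [isUnit_iff_exists_inv]
  have h0 : ∀ x, f x ≠ 0 := fun x => (hc.trans_le (hf x)).ne'
  refine ⟨BoundedContinuousFunction.ofNormedAddCommGroup (fun x => (f x)⁻¹)
    (f.continuous.inv₀ h0) c⁻¹ (fun x => ?_), ?_⟩
  · rw [norm_inv, Real.norm_of_nonneg (hc.le.trans (hf x))]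
    exact inv_anti₀ hc (hf x)
  · ext x
    exact mul_inv_cancel₀ (h0 x)

lemma le_segAvg {f : ℝ → ℝ} (hf : Continuous f) {c : ℝ} (h : ∀ x, c ≤ f x) (x : ℝ) :
    c ≤ segAvg f x := by
  have := intervalIntegral.integral_mono_on (a := 0) (b := 1) zero_le_one
    (f := fun _ => c) (g := fun σ => f (σ * x)) (intervalIntegrable_const (μ := volume))
    ((hf.comp (by fun_prop : Continuous fun σ : ℝ => σ * x)).intervalIntegrable _ _)
    (fun σ _ => h _)
  simpa [segAvg] using this

lemma exp_neg_norm_le (f : ℝ →ᵇ ℝ) (x : ℝ) : Real.exp (-‖f‖) ≤ NormedSpace.exp f x := by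
  rw [exp_bcf_apply]
  exact Real.exp_le_exp.2 (by have := f.norm_coe_le_norm x; exact (abs_le.1 this).1)

lemma isUnit_segAvgL_exp (f : ℝ →ᵇ ℝ) : IsUnit (segAvgL (NormedSpace.exp f)) :=
  isUnit_bcf (Real.exp_pos (-‖f‖)) fun x =>
    le_segAvg (NormedSpace.exp f).continuous (exp_neg_norm_le f) x

/-- Local solution of the flow-map equation, in the Banach algebra of bounded continuous functions.
`F t` is the spatial derivative of the flow map, `R t` is the reciprocal of its average, and `r` is
the time primitive of `R`. The proof solves the equation `r' = R` with `F = exp (J r)`, whose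
right-hand side is a smooth function of `r`; the spatial derivative of `F` follows from
`(J r)' = -k r`. -/
lemma exists_lagrangian (k : ℝ → ℝ) (hk : Continuous k) (a : ℝ)
    (J : (ℝ →ᵇ ℝ) →L[ℝ] (ℝ →ᵇ ℝ)) (hJ : ∀ f x, J f x = ∫ z in x..a, k z * f z) :
    ∃ (ε c : ℝ) (r F R : ℝ → (ℝ →ᵇ ℝ)), 0 < ε ∧ 0 < c ∧
      ContinuousOn r (Set.Ioo (-ε) ε) ∧ ContinuousOn R (Set.Ioo (-ε) ε) ∧ F 0 = 1 ∧
      (∀ t x, HasDerivAt (F t) (-(k x * r t x * F t x)) x) ∧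
      (∀ t ∈ Set.Ioo (-ε) ε, HasDerivAt F (F t * J (R t)) t) ∧
      (∀ t x, R t x * segAvg (F t) x = 1) ∧
      (∀ t ∈ Set.Ioo (-ε) ε, ∀ x, c ≤ F t x) := by
  set W : (ℝ →ᵇ ℝ) → (ℝ →ᵇ ℝ) := fun r => Ring.inverse (segAvgL (NormedSpace.exp (J r))) with hW
  have hWd : ∀ r, ContDiffAt ℝ 1 W r := fun r => by
    obtain ⟨u, hu⟩ := isUnit_segAvgL_exp (J r)
    have h1 : ContDiffAt ℝ 1 (fun r : ℝ →ᵇ ℝ => segAvgL (NormedSpace.exp (J r))) r :=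
      segAvgL.contDiff.contDiffAt.comp r
        ((NormedSpace.exp_analytic (𝕂 := ℝ) (J r)).contDiffAt.comp r J.contDiff.contDiffAt)
    have h2 := contDiffAt_ringInverse ℝ (n := 1) u
    rw [hu] at h2
    exact h2.comp r h1
  obtain ⟨r, hr0, ε, hε, hr⟩ :=
    (hWd 0).exists_forall_mem_closedBall_exists_eq_forall_mem_Ioo_hasDerivAt₀ 0
  simp only [zero_sub, zero_add] at hr
  -- shrink the time interval so that `r` stays in the unit ball
  have hrc : ContinuousAt r 0 := (hr 0 ⟨by linarith, hε⟩).continuousAt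
  obtain ⟨δ, hδ, hball⟩ := Metric.continuousAt_iff.1 hrc 1 one_pos
  have hsub : ∀ t ∈ Set.Ioo (-min ε δ) (min ε δ), t ∈ Set.Ioo (-ε) ε ∧ ‖r t‖ ≤ 1 := by
    intro t ht
    have h1 := min_le_left ε δ
    have h2 := min_le_right ε δ
    refine ⟨⟨by linarith [ht.1], by linarith [ht.2]⟩, ?_⟩
    have := hball (x := t) (by
      rw [Real.dist_eq, sub_zero]
      exact abs_lt.2 ⟨by linarith [ht.1], by linarith [ht.2]⟩)
    rw [hr0, dist_zero_right] at this
    exact this.le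
  have hrcont : ContinuousOn r (Set.Ioo (-min ε δ) (min ε δ)) := fun t ht =>
    (hr t (hsub t ht).1).continuousAt.continuousWithinAt
  refine ⟨min ε δ, Real.exp (-‖J‖), r, fun t => NormedSpace.exp (J (r t)), fun t => W (r t),
    lt_min hε hδ, Real.exp_pos _, hrcont, ?_, ?_, ?_, ?_, ?_, ?_⟩
  · intro t ht
    exact ((hWd (r t)).continuousAt.comp_continuousWithinAt (hrcont t ht))
  · simp [hr0]
  · intro t x
    have hc : Continuous fun z => k z * r t z := hk.mul (r t).continuous
    have h1 : HasDerivAt (fun x => J (r t) x) (-(k x * r t x)) x := by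
      simp_rw [hJ, intervalIntegral.integral_symm a]
      exact (intervalIntegral.integral_hasDerivAt_right (hc.intervalIntegrable _ _)
        hc.aestronglyMeasurable.stronglyMeasurableAtFilter hc.continuousAt).neg
    have h2 := h1.exp
    have e : (⇑(NormedSpace.exp (J (r t)) : ℝ →ᵇ ℝ)) = fun x => Real.exp (J (r t) x) :=
      funext fun x => exp_bcf_apply _ _
    simp only [e]
    convert h2 using 1
    ring
  · intro t ht
    have h1 : HasDerivAt (fun t => J (r t)) (J (W (r t))) t :=
      J.hasFDerivAt.comp_hasDerivAt t (hr t (hsub t ht).1)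
    have h2 := (hasFDerivAt_exp (𝕂 := ℝ) (x := J (r t))).comp_hasDerivAt t h1
    exact h2
  · intro t x
    have := Ring.inverse_mul_cancel _ (isUnit_segAvgL_exp (J (r t)))
    exact DFunLike.congr_fun this x
  · intro t ht x
    refine le_trans (Real.exp_le_exp.2 ?_) (exp_neg_norm_le _ x)
    have h1 := J.le_opNorm (r t)
    have h2 : ‖J‖ * ‖r t‖ ≤ ‖J‖ * 1 := mul_le_mul_of_nonneg_left (hsub t ht).2 J.opNorm_nonneg
    linarith

/-! ### Inverting the flow map -/

/-- The inverse of a family of diffeomorphisms of the line. If `Φ(·,t)` has derivative `φ ≥ c > 0`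
and `∂ₜΦ = v`, with `φ`, `v` continuous, then each `Φ(·,t)` is a bijection, and its inverse `X`
is jointly continuous and differentiable, with `∂_y X = 1/φ(X,t)` and `∂ₜX = -v(X,t)/φ(X,t)`. -/
lemma exists_inverse_flow (Φ φ v : ℝ → ℝ → ℝ) (I : Set ℝ) (hI : IsOpen I) (c : ℝ) (hc : 0 < c)
    (hφ : ∀ x, ∀ t ∈ I, HasDerivAt (fun x => Φ x t) (φ x t) x)
    (hv : ∀ x, ∀ t ∈ I, HasDerivAt (fun t => Φ x t) (v x t) t)
    (hcφ : ∀ x, ∀ t ∈ I, c ≤ φ x t)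
    (cφ : ContinuousOn (fun p : ℝ × ℝ => φ p.1 p.2) (Set.univ ×ˢ I))
    (cv : ContinuousOn (fun p : ℝ × ℝ => v p.1 p.2) (Set.univ ×ˢ I)) :
    ∃ X : ℝ → ℝ → ℝ,
      (∀ y, ∀ t ∈ I, Φ (X y t) t = y) ∧ (∀ x, ∀ t ∈ I, X (Φ x t) t = x) ∧
      ContinuousOn (fun p : ℝ × ℝ => X p.1 p.2) (Set.univ ×ˢ I) ∧
      ∀ y, ∀ t ∈ I, HasFDerivAt (fun p : ℝ × ℝ => X p.1 p.2)
        ((φ (X y t) t)⁻¹ • (ContinuousLinearMap.fst ℝ ℝ ℝ -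
          v (X y t) t • ContinuousLinearMap.snd ℝ ℝ ℝ)) (y, t) := by
  have hO : IsOpen ((Set.univ : Set ℝ) ×ˢ I) := isOpen_univ.prod hI
  have hexp : ∀ t ∈ I, ∀ x x', x ≤ x' → c * (x' - x) ≤ Φ x' t - Φ x t := by
    intro t ht x x' hxx
    exact convex_univ.mul_sub_le_image_sub_of_le_deriv
      (fun x _ => (hφ x t ht).continuousAt.continuousWithinAt)
      (fun x _ => (hφ x t ht).differentiableAt.differentiableWithinAt)
      (fun x _ => by rw [(hφ x t ht).deriv]; exact hcφ x t ht) x (mem_univ _) x' (mem_univ _) hxx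
  have habs : ∀ t ∈ I, ∀ x x', c * |x' - x| ≤ |Φ x' t - Φ x t| := by
    intro t ht x x'
    rcases le_total x x' with h | h
    · rw [abs_of_nonneg (sub_nonneg.2 h)]
      exact (hexp t ht x x' h).trans (le_abs_self _)
    · rw [abs_sub_comm, abs_sub_comm (Φ x' t), abs_of_nonneg (sub_nonneg.2 h)]
      exact (hexp t ht x' x h).trans (le_abs_self _)
  have hsurj : ∀ t ∈ I, Function.Surjective fun x => Φ x t := by
    intro t ht
    refine Continuous.surjective
      (continuous_iff_continuousAt.2 fun x => (hφ x t ht).continuousAt) ?_ ?_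
    · refine tendsto_atTop_mono' _ ?_
        (tendsto_atTop_add_const_left _ (Φ 0 t) (tendsto_id.const_mul_atTop hc))
      filter_upwards [eventually_ge_atTop 0] with x hx
      have := hexp t ht 0 x hx
      simp only [id, sub_zero] at this ⊢; linarith
    · refine tendsto_atBot_mono' _ ?_
        (tendsto_atBot_add_const_left _ (Φ 0 t) (tendsto_id.const_mul_atBot hc))
      filter_upwards [eventually_le_atBot 0] with x hx
      have := hexp t ht x 0 hx
      simp only [id, zero_sub] at this ⊢; linarith
  have hex : ∀ y t, ∃ x, t ∈ I → Φ x t = y := by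
    intro y t
    by_cases ht : t ∈ I
    · obtain ⟨x, hx⟩ := hsurj t ht y
      exact ⟨x, fun _ => hx⟩
    · exact ⟨0, fun h => absurd h ht⟩
  choose X hX using hex
  have hXl : ∀ y, ∀ t ∈ I, Φ (X y t) t = y := fun y t ht => hX y t ht
  have hXr : ∀ x, ∀ t ∈ I, X (Φ x t) t = x := by
    intro x t ht
    have h := habs t ht x (X (Φ x t) t)
    rw [hXl _ t ht, sub_self, abs_zero] at h
    have : |X (Φ x t) t - x| ≤ 0 := by
      by_contra hn
      push Not at hn
      have := mul_pos hc hn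
      linarith
    exact sub_eq_zero.1 (abs_eq_zero.1 (le_antisymm this (abs_nonneg _)))
  have hXc : ∀ y, ∀ t ∈ I, ContinuousAt (fun p : ℝ × ℝ => X p.1 p.2) (y, t) := by
    intro y t ht
    rw [ContinuousAt, tendsto_iff_dist_tendsto_zero]
    -- `c |X(p) - X(y,t)|` is controlled by the displacement of `Φ(X(y,t),·)` in time
    have h0 : Tendsto (fun p : ℝ × ℝ => c⁻¹ * |p.1 - Φ (X y t) p.2|) (𝓝 (y, t)) (𝓝 0) := by
      have h1 : ContinuousAt (fun p : ℝ × ℝ => c⁻¹ * |p.1 - Φ (X y t) p.2|) (y, t) := by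
        have h2 : ContinuousAt (fun p : ℝ × ℝ => Φ (X y t) p.2) (y, t) :=
          ContinuousAt.comp (f := Prod.snd) (x := ((y, t) : ℝ × ℝ)) (hv _ t ht).continuousAt
            continuousAt_snd
        exact continuousAt_const.mul (continuousAt_fst.sub h2).abs
      have := h1.tendsto
      simpa [hXl y t ht] using this
    refine squeeze_zero' (Eventually.of_forall fun _ => dist_nonneg) ?_ h0
    filter_upwards [hO.mem_nhds (show ((y, t) : ℝ × ℝ) ∈ Set.univ ×ˢ I from ⟨mem_univ _, ht⟩)]
      with p hp
    have h := habs p.2 hp.2 (X y t) (X p.1 p.2)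
    rw [hXl _ _ hp.2] at h
    rw [Real.dist_eq, inv_mul_eq_div, le_div_iff₀ hc, mul_comm]
    exact h
  refine ⟨X, hXl, hXr, fun p hp => (hXc p.1 p.2 hp.2).continuousWithinAt, ?_⟩
  intro y t ht
  set x := X y t with hx
  have hp0 : φ x t ≠ 0 := (hc.trans_le (hcφ x t ht)).ne'
  have hmem : ∀ᶠ p : ℝ × ℝ in 𝓝 (x, t), p ∈ Set.univ ×ˢ I :=
    hO.mem_nhds ⟨mem_univ _, ht⟩
  have hcat : ∀ w : ℝ → ℝ → ℝ, ContinuousOn (fun p : ℝ × ℝ => w p.1 p.2) (Set.univ ×ˢ I) →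
      ContinuousAt (fun p : ℝ × ℝ => ContinuousLinearMap.toSpanSingleton ℝ (w p.1 p.2)) (x, t) :=
    fun w hw => ((ContinuousLinearMap.toSpanSingletonCLE (𝕜 := ℝ) (E := ℝ)).continuous.continuousAt).comp
      (hw.continuousAt (hO.mem_nhds ⟨mem_univ _, ht⟩))
  have hΦ := hasStrictFDerivAt_uncurry_coprod (𝕜 := ℝ) (u := ((x, t) : ℝ × ℝ)) (f := Φ)
    (f₁ := fun x t => ContinuousLinearMap.toSpanSingleton ℝ (φ x t))
    (f₂ := fun x t => ContinuousLinearMap.toSpanSingleton ℝ (v x t))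
    (hmem.mono fun p hp => (hφ p.1 p.2 hp.2).hasFDerivAt)
    (hmem.mono fun p hp => (hv p.1 p.2 hp.2).hasFDerivAt)
    (hcat φ cφ) (hcat v cv)
  set L : ℝ × ℝ →L[ℝ] ℝ := (ContinuousLinearMap.toSpanSingleton ℝ (φ x t)).coprod
    (ContinuousLinearMap.toSpanSingleton ℝ (v x t)) with hL
  have hH : HasFDerivAt (fun p : ℝ × ℝ => (Φ p.1 p.2, p.2))
      (L.prod (ContinuousLinearMap.snd ℝ ℝ ℝ)) (x, t) :=
    hΦ.hasFDerivAt.prodMk hasFDerivAt_snd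
  let M : ℝ × ℝ →L[ℝ] ℝ := (φ x t)⁻¹ • (ContinuousLinearMap.fst ℝ ℝ ℝ -
          v x t • ContinuousLinearMap.snd ℝ ℝ ℝ)
  let e : (ℝ × ℝ) ≃L[ℝ] (ℝ × ℝ) := ContinuousLinearEquiv.equivOfInverse
    (L.prod (ContinuousLinearMap.snd ℝ ℝ ℝ)) (M.prod (ContinuousLinearMap.snd ℝ ℝ ℝ))
    (fun p => by
      ext
      · simp [M, hL]; field_simp; ring
      · simp)
    (fun p => by
      ext
      · simp [M, hL]; field_simp; ring
      · simp)
  have hinv : HasFDerivAt (fun p : ℝ × ℝ => (X p.1 p.2, p.2)) (e.symm : ℝ × ℝ →L[ℝ] ℝ × ℝ) (y, t) := by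
    refine HasFDerivAt.of_local_left_inverse (f := fun p : ℝ × ℝ => (Φ p.1 p.2, p.2))
      ((hXc y t ht).prodMk continuousAt_snd) hH ?_
    filter_upwards [hO.mem_nhds (show ((y, t) : ℝ × ℝ) ∈ Set.univ ×ˢ I from ⟨mem_univ _, ht⟩)]
      with p hp
    simp [hXl _ _ hp.2]
  exact hinv.fst

/-! ### Eulerian solution -/

/-- Continuity in time for the sup norm gives joint continuity in space and time. -/
lemma continuousOn_bcf_uncurry {w : ℝ → (ℝ →ᵇ ℝ)} {I : Set ℝ} (hw : ContinuousOn w I) :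
    ContinuousOn (fun p : ℝ × ℝ => w p.2 p.1) (Set.univ ×ˢ I) := by
  have h : ContinuousOn (fun p : ℝ × ℝ => w p.2) (Set.univ ×ˢ I) :=
    hw.comp continuousOn_snd fun p hp => hp.2
  have hev : Continuous fun q : (ℝ →ᵇ ℝ) × ℝ => q.1 q.2 := continuous_eval
  exact hev.comp_continuousOn (h.prodMk continuousOn_fst)

/-- local existence for the model equation: for `θ₀ ∈ C₀²(ℝ⁺)` with
`∂_y θ₀(0) = 0` there exist `T > 0` and a solution `θ` of the model equation on `[0,T)`
in the solution class, with `θ(·,0) = θ₀`. -/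
theorem statement0 (θ₀ : ℝ → ℝ)
    (hreg : ContDiffOn ℝ 2 θ₀ (Set.Ici 0))
    (hsupp : ∃ a : ℝ, ∀ y ≥ a, θ₀ y = 0)
    (hder0 : derivWithin θ₀ (Set.Ici 0) 0 = 0) :
    ∃ T : ℝ, 0 < T ∧ ∃ θ : ℝ → ℝ → ℝ,
      InSolutionClass θ (Set.Ico 0 T) ∧
      SolvesModel θ (Set.Ico 0 T) ∧
      ∀ y ≥ (0:ℝ), θ y 0 = θ₀ y := by

  obtain ⟨G, E, k, a, ha, hE, hk, hG, hK, hk0, hGθ, hG0⟩ := exists_extension θ₀ hreg hsupp hder0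
  have hki : Integrable k := by
    refine hk.integrable_of_hasCompactSupport
      (HasCompactSupport.of_support_subset_isCompact (isCompact_Icc (a := -a) (b := a)) ?_)
    intro x hx
    by_contra hn
    exact hx (hk0 x (by
      by_contra h
      push Not at h
      exact hn ⟨(abs_lt.1 h).1.le, (abs_lt.1 h).2.le⟩))
  obtain ⟨J, hJ⟩ := exists_tailL k hk hki a
  obtain ⟨ε, c, r, F, R, hε, hc, cr, cR, hF0, hFx, hFt, hR, hFc⟩ := exists_lagrangian k hk a J hJ
  set I : Set ℝ := Set.Ioo (-ε) ε with hI
  have hIo : IsOpen I := isOpen_Ioo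
  set D : ℝ → (ℝ →ᵇ ℝ) := fun t => F t * J (R t) with hD
  have cF : ContinuousOn F I := fun t ht => (hFt t ht).continuousAt.continuousWithinAt
  have cJR : ContinuousOn (fun t => J (R t)) I := J.continuous.comp_continuousOn cR
  have cD : ContinuousOn D I := cF.mul cJR
  obtain ⟨X, hXl, hXr, cX, hXd⟩ := exists_inverse_flow (fun x t => x * segAvg (F t) x)
    (fun x t => F t x) (fun x t => x * segAvg (D t) x) I hIo c hc
    (fun x t _ => hasDerivAt_mul_segAvg (F t).continuous x)
    (fun x t ht => by
      have h := (((BoundedContinuousFunction.evalCLM ℝ x).comp segAvgL).hasFDerivAt.comp_hasDerivAt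
        t (hFt t ht)).const_mul x
      exact h)
    (fun x t ht => hFc t ht x) (continuousOn_bcf_uncurry cF)
    (continuousOn_fst.mul
      (continuousOn_bcf_uncurry (segAvgL.continuous.comp_continuousOn cD)))
  have hO : IsOpen ((Set.univ : Set ℝ) ×ˢ I) := isOpen_univ.prod hIo
  have hne : ∀ t ∈ I, ∀ x, F t x ≠ 0 := fun t ht x => (hc.trans_le (hFc t ht x)).ne'
  -- the maps `(y,t) ↦ w(X(y,t),t)` are jointly continuous
  have ccomp : ∀ w : ℝ → (ℝ →ᵇ ℝ), ContinuousOn w I →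
      ContinuousOn (fun p : ℝ × ℝ => w p.2 (X p.1 p.2)) (Set.univ ×ˢ I) := fun w hw =>
    (continuousOn_bcf_uncurry hw).comp (cX.prodMk continuousOn_snd) fun p hp => ⟨mem_univ _, hp.2⟩
  have cFX := ccomp F cF
  have cFXi : ContinuousOn (fun p : ℝ × ℝ => (F p.2 (X p.1 p.2))⁻¹) (Set.univ ×ˢ I) :=
    cFX.inv₀ fun p hp => hne _ hp.2 _
  have hXy : ∀ t ∈ I, ∀ y, HasDerivAt (fun y => X y t) (F t (X y t))⁻¹ y := by
    intro t ht y
    have h' := (hXd y t ht).comp_hasDerivAt y ((hasDerivAt_id y).prodMk (hasDerivAt_const y t))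
    have h : HasDerivAt (fun y => X y t) _ y := h'
    exact h.congr_deriv (by simp)
  -- `P = ∂_y θ` and `Q = ∂_y² θ`
  set P : ℝ → ℝ → ℝ := fun y t => X y t * k (X y t) * (F t (X y t))⁻¹ with hP
  set Q : ℝ → ℝ → ℝ := fun y t =>
    (E (X y t) + X y t * k (X y t) * k (X y t) * r t (X y t)) * (F t (X y t))⁻¹ *
      (F t (X y t))⁻¹ with hQ
  set θ : ℝ → ℝ → ℝ := fun y t => G (X y t) with hθ
  have hθF : ∀ y, ∀ t ∈ I, HasFDerivAt (fun p : ℝ × ℝ => θ p.1 p.2)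
      ((X y t * k (X y t)) • ((F t (X y t))⁻¹ • (ContinuousLinearMap.fst ℝ ℝ ℝ -
          (X y t * segAvg (D t) (X y t)) • ContinuousLinearMap.snd ℝ ℝ ℝ))) (y, t) := by
    intro y t ht
    exact (hG (X y t)).comp_hasFDerivAt (y, t) (hXd y t ht)
  have hθy : ∀ t ∈ I, ∀ y, HasDerivAt (fun y => θ y t) (P y t) y := fun t ht y =>
    (hG (X y t)).comp y (hXy t ht y)
  have hPy : ∀ t ∈ I, ∀ y, HasDerivAt (fun y => P y t) (Q y t) y := by
    intro t ht y
    have h1' := ((hK (X y t)).div (hFx t (X y t)) (hne t ht _)).comp y (hXy t ht y)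
    have h1 : HasDerivAt (fun y => X y t * k (X y t) / F t (X y t)) _ y := h1'
    have h0 := hne t ht (X y t)
    simp only [hP, ← div_eq_mul_inv]
    refine h1.congr_deriv ?_
    simp only [hQ]
    field_simp
    ring
  have cP : ContinuousOn (fun p : ℝ × ℝ => P p.1 p.2) (Set.univ ×ˢ I) :=
    (cX.mul (hk.comp_continuousOn cX)).mul cFXi
  have cQ : ContinuousOn (fun p : ℝ × ℝ => Q p.1 p.2) (Set.univ ×ˢ I) :=
    (((hE.comp_continuousOn cX).add (((cX.mul (hk.comp_continuousOn cX)).mul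
      (hk.comp_continuousOn cX)).mul (ccomp r cr))).mul cFXi).mul cFXi
  have hθY : ∀ t ∈ I, ∀ y, 0 ≤ y → thetaY θ y t = P y t := fun t ht y hy =>
    (hθy t ht y).hasDerivWithinAt.derivWithin (uniqueDiffOn_Ici (0:ℝ) y hy)
  have hX0 : ∀ t ∈ I, X 0 t = 0 := by
    intro t ht
    have := hXr 0 t ht
    simpa using this
  have hXm : ∀ t ∈ I, StrictMono fun y => X y t := fun t ht =>
    strictMono_of_hasDerivAt_pos (hXy t ht) fun y =>
      inv_pos.2 (hc.trans_le (hFc t ht _))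
  have hslice : ∀ t ∈ I, ∀ f : ℝ → ℝ → ℝ,
      ContinuousOn (fun p : ℝ × ℝ => f p.1 p.2) (Set.univ ×ˢ I) → Continuous fun y => f y t := by
    intro t ht f hf
    exact hf.comp_continuous (f := fun y => (y, t)) (by fun_prop) fun y => ⟨mem_univ _, ht⟩
  -- the inner integral of the velocity law, in Lagrangian variables
  have hinner : ∀ t ∈ I, ∀ y, 0 ≤ y →
      ∫ z in Set.Ioi y, thetaY θ z t / z = J (R t) (X y t) := by
    intro t ht y hy
    set q : ℝ → ℝ := fun z => k (X z t) * R t (X z t) * (F t (X z t))⁻¹ with hq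
    have hXc : Continuous fun z => X z t := hslice t ht X cX
    have hqc : Continuous q :=
      ((hk.comp hXc).mul ((R t).continuous.comp hXc)).mul (hslice t ht (fun y t => (F t (X y t))⁻¹) cFXi)
    have hcong : ∫ z in Set.Ioi y, thetaY θ z t / z = ∫ z in Set.Ioi y, q z := by
      refine setIntegral_congr_fun measurableSet_Ioi fun z hz => ?_
      have hz0 : 0 < z := hy.trans_lt hz
      have hl := hXl z t ht
      have hRz := hR t (X z t)
      have hF := hne t ht (X z t)
      simp only [hθY t ht z hz0.le, hP, hq]
      rw [div_eq_iff hz0.ne']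
      -- `z = Φ(X(z,t),t) = X A` and `R A = 1`
      calc X z t * k (X z t) * (F t (X z t))⁻¹
          = k (X z t) * (F t (X z t))⁻¹ * (X z t * (R t (X z t) * segAvg (F t) (X z t))) := by
            rw [hRz]; ring
        _ = k (X z t) * R t (X z t) * (F t (X z t))⁻¹ * (X z t * segAvg (F t) (X z t)) := by ring
        _ = _ := by rw [hl]
    have hqi : Integrable q := by
      refine hqc.integrable_of_hasCompactSupport
        (HasCompactSupport.of_support_subset_isCompact
          (isCompact_Icc (a := (-a) * segAvg (F t) (-a)) (b := a * segAvg (F t) a)) ?_)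
      intro z hz
      have hlt : |X z t| < a := by
        by_contra h
        push Not at h
        exact hz (by simp [hq, hk0 _ h])
      have h1 := (abs_lt.1 hlt).1
      have h2 := (abs_lt.1 hlt).2
      constructor
      · exact ((hXm t ht).lt_iff_lt.1 (by simpa only [hXr (-a) t ht] using h1)).le
      · exact ((hXm t ht).lt_iff_lt.1 (by simpa only [hXr a t ht] using h2)).le
    -- the right-hand side is, up to sign, a primitive of `q` vanishing for large `z`
    have hB : ∀ z, HasDerivAt (fun z => -(J (R t) (X z t))) (q z) z := by
      intro z
      have hcR : Continuous fun z => k z * R t z := hk.mul (R t).continuous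
      have h1 : HasDerivAt (fun x => J (R t) x) (-(k (X z t) * R t (X z t))) (X z t) := by
        simp_rw [hJ, intervalIntegral.integral_symm a]
        exact (intervalIntegral.integral_hasDerivAt_right (hcR.intervalIntegrable _ _)
          hcR.aestronglyMeasurable.stronglyMeasurableAtFilter hcR.continuousAt).neg
      have h2 := (h1.comp z (hXy t ht z)).neg
      have h3 : HasDerivAt (fun z => -(J (R t) (X z t))) _ z := h2
      exact h3.congr_deriv (by simp only [hq]; ring)
    have hlim : Tendsto (fun z => -(J (R t) (X z t))) atTop (𝓝 0) := by
      refine tendsto_const_nhds.congr' ?_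
      filter_upwards [eventually_ge_atTop (a * segAvg (F t) a)] with z hz
      have haX : a ≤ X z t := by
        have := (hXm t ht).monotone hz
        simpa only [hXr a t ht] using this
      rw [hJ, intervalIntegral.integral_congr (g := fun _ => (0:ℝ))]
      · simp
      · intro s hs
        rw [uIcc_of_ge haX] at hs
        simp [hk0 s (hs.1.trans (le_abs_self s))]
    rw [hcong, integral_Ioi_of_hasDerivAt_of_tendsto (hB y).continuousAt.continuousWithinAt
      (fun z _ => hB z) hqi.integrableOn hlim]
    ring
  -- the velocity at `y` is the time derivative of `Φ` at the label `X(y,t)`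
  have hu : ∀ t ∈ I, ∀ y, 0 ≤ y → uVel θ y t = X y t * segAvg (D t) (X y t) := by
    intro t ht y hy
    have h1 : uVel θ y t = ∫ y' in (0:ℝ)..y, J (R t) (X y' t) := by
      refine intervalIntegral.integral_congr fun z hz => ?_
      rw [uIcc_of_le hy] at hz
      exact hinner t ht z hz.1
    have h2 : ∀ z, HasDerivAt (fun z => X z t * segAvg (D t) (X z t)) (J (R t) (X z t)) z := by
      intro z
      have h' := (hasDerivAt_mul_segAvg (D t).continuous (X z t)).comp z (hXy t ht z)
      have h : HasDerivAt (fun z => X z t * segAvg (D t) (X z t)) _ z := h'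
      have h0 := hne t ht (X z t)
      refine h.congr_deriv ?_
      simp only [hD, BoundedContinuousFunction.coe_mul, Pi.mul_apply]
      field_simp
    have hcB : Continuous fun z => J (R t) (X z t) :=
      (J (R t)).continuous.comp (hslice t ht X cX)
    rw [h1, intervalIntegral.integral_eq_sub_of_hasDerivAt (fun z _ => h2 z)
      (hcB.intervalIntegrable _ _), hX0 t ht]
    simp
  have hIco : Set.Ico 0 ε ⊆ I := fun t ht => ⟨by linarith [ht.1], ht.2⟩
  have hsub : Set.Ici (0:ℝ) ×ˢ Set.Ico 0 ε ⊆ Set.univ ×ˢ I :=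
    Set.prod_mono (Set.subset_univ _) hIco
  refine ⟨ε, hε, θ, ⟨?_, ?_, ?_, ?_, ?_, ?_⟩, ?_, ?_⟩
  · refine ContDiffOn.mono (t := Set.Ici (0:ℝ) ×ˢ Set.Ico 0 ε) (s := Set.univ ×ˢ I) ?_ hsub
    rw [show (1 : WithTop ℕ∞) = 0 + 1 from (zero_add 1).symm,
      contDiffOn_succ_iff_fderiv_of_isOpen hO]
    refine ⟨fun p hp => (hθF p.1 p.2 hp.2).differentiableAt.differentiableWithinAt,
      by simp, contDiffOn_zero.2 ?_⟩
    refine ContinuousOn.congr ?_ fun p hp => (hθF p.1 p.2 hp.2).fderiv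
    exact (cX.mul (hk.comp_continuousOn cX)).smul (cFXi.smul (continuousOn_const.sub
      ((cX.mul (ccomp (fun t => segAvgL (D t)) (segAvgL.continuous.comp_continuousOn cD))).smul
        continuousOn_const)))
  · intro t ht
    have ht' := hIco ht
    have hd1 : deriv (fun y => θ y t) = fun y => P y t := funext fun y => (hθy t ht' y).deriv
    have hd2 : deriv (fun y => P y t) = fun y => Q y t := funext fun y => (hPy t ht' y).deriv
    refine ContDiff.contDiffOn ?_
    rw [show (2 : WithTop ℕ∞) = 1 + 1 from one_add_one_eq_two.symm, contDiff_succ_iff_deriv]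
    refine ⟨fun y => (hθy t ht' y).differentiableAt, by simp, ?_⟩
    rw [hd1, contDiff_one_iff_deriv, hd2]
    exact ⟨fun y => (hPy t ht' y).differentiableAt, hslice t ht' Q cQ⟩
  · intro t ht
    have ht' := hIco ht
    refine ⟨a * segAvg (F t) a, fun y hy => hG0 _ ?_⟩
    have := (hXm t ht').monotone hy
    simpa only [hXr a t ht'] using this
  · exact (cP.mono hsub).congr fun p hp => hθY p.2 (hIco hp.2) p.1 hp.1
  · refine (cQ.mono hsub).congr fun p hp => ?_
    have ht' := hIco hp.2
    have h1 : derivWithin (fun w => thetaY θ w p.2) (Set.Ici 0) p.1 =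
        derivWithin (fun w => P w p.2) (Set.Ici 0) p.1 :=
      derivWithin_congr (fun w hw => hθY p.2 ht' w hw) (hθY p.2 ht' p.1 hp.1)
    simp only [h1]
    exact (hPy p.2 ht' p.1).hasDerivWithinAt.derivWithin (uniqueDiffOn_Ici (0:ℝ) p.1 hp.1)
  · intro t ht
    rw [hθY t (hIco ht) 0 le_rfl]
    simp [hP, hX0 t (hIco ht)]
  · intro y hy t ht
    have ht' := hIco ht
    have h : HasDerivWithinAt (fun s => θ y s) _ (Set.Ico 0 ε) t := ((hθF y t ht').comp_hasDerivAt t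
      ((hasDerivAt_const t y).prodMk (hasDerivAt_id t))).hasDerivWithinAt (s := Set.Ico 0 ε)
    rw [hu t ht' y hy, hθY t ht' y hy]
    refine h.congr_deriv ?_
    simp [hP]
    ring
  · intro y hy
    have h := hXr y 0 ⟨by linarith, hε⟩
    have h1 : y * segAvg (F 0) y = y := by
      rw [mul_segAvg, hF0]
      simp
    simp only [h1] at h
    simp only [hθ, h, hGθ y hy]
end

section
/- Let θ₀ ∈ C₀²(ℝ⁺) with ∂_y θ₀(0) = 0 be given. Suppose φ ∈ C¹(ℝ⁺ × [0,T]) is a solution of the flow-map equation with admissible data (φ₀, g) such that θ₀(y) = g(Φ₀⁻¹(y)) for all y ∈ ℝ⁺, where Φ₀(x) = ∫_0^x φ₀(σ) dσ, and inf_{(x,t) ∈ ℝ⁺×[0,T]} φ(x,t) > 0. Then θ(y,t) := g(Φ⁻¹(y,t)) belongs to C([0,T), C₀²(ℝ⁺)) ∩ C¹([0,T), C¹(ℝ⁺)), satisfies ∂_y θ(0,t) = 0, solves the model equation θ_t + u θ_y = 0 with velocity u(y,t) = ∫_0^y (∫_{y'}^∞ ∂_z θ(z,t)/z dz) dy', and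 satisfies θ(·,0) = θ₀. -/
/-!
The function `θ` is constant along the trajectories `t ↦ Φ(x,t)`, so everything follows by passing
between the Lagrangian variable `x` and the Eulerian variable `y = Φ(x,t)`.

Regularity: since `φ` is bounded below by `m > 0`, the map `Φ(·,t)` is an expanding bijection of
`[0,∞)`, and its inverse `X(y,t)` is jointly `C¹` with `∂_y X = 1/φ` and `∂_t X = -∂ₜΦ/φ` at
`(X(y,t),t)` (`exists_inverse`). Thus `θ = g ∘ X` is jointly `C¹` with
`∂_y θ = g'(X)/φ(X,t)`, which can be differentiated once more in `y` because `g'` and `φ` are `C¹`.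
One-sided derivatives at the boundary of the half-strip are avoided by first extending `φ` to the
plane (`exists_extension`), which makes `Φ` a `C¹` function on the plane (`hasFDerivAt_primitive`).

Equation: substituting `y = Φ(x,t)` in the two integrals defining `u` (`uVel_comp`) gives
`u(Φ(x,t),t) = ∫₀ˣ φ(s,t) ∫_s^∞ g'(z)/Φ(z,t) dz ds = ∫₀ˣ ∂ₜφ(s,t) ds = ∂ₜΦ(x,t)`,
where the middle equality is the flow-map equation. Hence
`∂_t θ = g'(X) ∂_t X = -∂ₜΦ(X,t) ∂_y θ = -u ∂_y θ`.
-/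


open Set MeasureTheory Filter Topology

/-! ### Extension to the plane and the inverse flow map -/

/-- A `C¹` function on the half-strip `[0,∞) × [0,T]` extends to a continuous `F` on the plane whose
time derivative `p` exists everywhere and is continuous: extend `∂ₜφ` by composing with the
retraction onto the half-strip and integrate in time. This removes the one-sided derivatives in
time from the differentiation under the integral sign in `hasFDerivAt_primitive`. -/
theorem exists_extension_s2 {φ : ℝ → ℝ → ℝ} {T : ℝ} (hT : 0 < T)
    (hφ : ContDiffOn ℝ 1 (fun p : ℝ × ℝ => φ p.1 p.2) (Ici 0 ×ˢ Icc 0 T)) :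
    ∃ F p : ℝ → ℝ → ℝ, Continuous (fun q : ℝ × ℝ => F q.1 q.2) ∧
      Continuous (fun q : ℝ × ℝ => p q.1 q.2) ∧
      (∀ x t, HasDerivAt (fun s => F x s) (p x t) t) ∧
      ∀ x ≥ (0:ℝ), ∀ t ∈ Icc (0:ℝ) T, F x t = φ x t := by
  have hS : UniqueDiffOn ℝ (Ici (0:ℝ) ×ˢ Icc (0:ℝ) T) :=
    (uniqueDiffOn_Ici 0).prod (uniqueDiffOn_Icc hT)
  have hr : ∀ q : ℝ × ℝ, (max q.1 0, max 0 (min T q.2)) ∈ Ici (0:ℝ) ×ˢ Icc (0:ℝ) T := by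
    intro q
    simp [hT.le]
  have hrc : Continuous fun q : ℝ × ℝ => (max q.1 0, max 0 (min T q.2)) := by fun_prop
  set p : ℝ → ℝ → ℝ := fun x t =>
    fderivWithin ℝ (fun p : ℝ × ℝ => φ p.1 p.2) (Ici 0 ×ˢ Icc 0 T)
      (max x 0, max 0 (min T t)) (0, 1) with hp
  have hpc : Continuous (fun q : ℝ × ℝ => p q.1 q.2) := by
    have h1 := (hφ.continuousOn_fderivWithin hS le_rfl).comp_continuous hrc hr
    exact h1.clm_apply continuous_const
  have hpx : ∀ x, Continuous (p x) := fun x =>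
    hpc.comp (Continuous.prodMk_right x)
  have hφ0 : Continuous fun x : ℝ => φ (max x 0) 0 := by
    refine hφ.continuousOn.comp_continuous (f := fun x : ℝ => (max x 0, (0:ℝ))) (by fun_prop) ?_
    intro x
    simp [hT.le]
  refine ⟨fun x t => φ (max x 0) 0 + ∫ τ in (0:ℝ)..t, p x τ, p, ?_, hpc, ?_, ?_⟩
  · refine (hφ0.comp continuous_fst).add ?_
    exact intervalIntegral.continuous_parametric_intervalIntegral_of_continuous
      (f := fun (q : ℝ × ℝ) τ => p q.1 τ)
      (hpc.comp (by fun_prop : Continuous fun z : (ℝ × ℝ) × ℝ => (z.1.1, z.2))) continuous_snd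
  · intro x t
    exact ((hpx x).integral_hasStrictDerivAt 0 t).hasDerivAt.const_add _
  · -- on the half-strip `p` is the time derivative of `φ`, so `F = φ` by the fundamental theorem
    intro x hx t ht
    have hd : ∀ s ∈ Icc (0:ℝ) T, HasDerivWithinAt (fun s => φ x s) (p x s) (Icc 0 T) s := by
      intro s hs
      have h1 := (hφ.differentiableOn (by simp) (x, s) ⟨hx, hs⟩).hasFDerivWithinAt
      have h2 : HasDerivWithinAt (fun s : ℝ => (x, s)) ((0:ℝ), (1:ℝ)) (Icc 0 T) s :=
        (hasDerivWithinAt_const _ _ _).prodMk (hasDerivWithinAt_id _ _)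
      have h3 := h1.comp_hasDerivWithinAt s h2 (fun s hs => ⟨hx, hs⟩)
      have hs' : max 0 (min T s) = s := by rw [min_eq_right hs.2, max_eq_right hs.1]
      simp only [hp, max_eq_left (show (0:ℝ) ≤ x from hx), hs']
      exact h3
    have h4 : ∫ τ in (0:ℝ)..t, p x τ = φ x t - φ x 0 := by
      refine intervalIntegral.integral_eq_sub_of_hasDerivAt_of_le ht.1 ?_ ?_
        ((hpx x).intervalIntegrable _ _)
      · exact fun s hs => ((hd s ⟨hs.1, hs.2.trans ht.2⟩).continuousWithinAt).mono
          (Icc_subset_Icc_right ht.2)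
      · exact fun s hs => (hd s ⟨hs.1.le, hs.2.le.trans ht.2⟩).hasDerivAt
          (Icc_mem_nhds hs.1 (hs.2.trans_le ht.2))
    simp only [h4, max_eq_left (show (0:ℝ) ≤ x from hx)]
    ring

/-- The flow map `Ψ(x,t) = ∫₀ˣ F(σ,t) dσ` has differential `F dx + (∫₀ˣ ∂ₜF) dt`, because both of
its partial derivatives exist and are continuous on the plane. -/
theorem hasFDerivAt_primitive {F p : ℝ → ℝ → ℝ}
    (hF : Continuous (fun q : ℝ × ℝ => F q.1 q.2)) (hp : Continuous (fun q : ℝ × ℝ => p q.1 q.2))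
    (hd : ∀ x t, HasDerivAt (fun s => F x s) (p x t) t) (x t : ℝ) :
    HasFDerivAt (fun q : ℝ × ℝ => ∫ σ in (0:ℝ)..q.1, F σ q.2)
      (F x t • ContinuousLinearMap.fst ℝ ℝ ℝ +
        (∫ σ in (0:ℝ)..x, p σ t) • ContinuousLinearMap.snd ℝ ℝ ℝ) (x, t) := by
  have hFx : ∀ t, Continuous fun x => F x t := fun t => hF.comp (Continuous.prodMk_left t)
  have hpx : ∀ t, Continuous fun x => p x t := fun t => hp.comp (Continuous.prodMk_left t)
  have hdt : ∀ x t, HasDerivAt (fun s => ∫ σ in (0:ℝ)..x, F σ s) (∫ σ in (0:ℝ)..x, p σ t) t := by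
    intro x t
    obtain ⟨C, hC⟩ := (isCompact_uIcc.prod
      (isCompact_Icc (a := t - 1) (b := t + 1))).exists_bound_of_continuousOn
      (s := uIcc 0 x ×ˢ Icc (t - 1) (t + 1)) hp.continuousOn
    refine (intervalIntegral.hasDerivAt_integral_of_dominated_loc_of_deriv_le
      (F := fun s σ => F σ s) (F' := fun s σ => p σ s) (bound := fun _ => C)
      (s := Icc (t - 1) (t + 1)) (Icc_mem_nhds (by linarith) (by linarith)) ?_ ?_ ?_ ?_ ?_ ?_).2
    · exact Eventually.of_forall fun s => (hFx s).aestronglyMeasurable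
    · exact (hFx t).intervalIntegrable _ _
    · exact (hpx t).aestronglyMeasurable
    · exact Eventually.of_forall fun σ hσ s hs => hC (σ, s) ⟨uIoc_subset_uIcc hσ, hs⟩
    · exact continuous_const.intervalIntegrable _ _
    · exact Eventually.of_forall fun σ _ s _ => hd σ s
  have hPc : Continuous fun q : ℝ × ℝ => ∫ σ in (0:ℝ)..q.1, p σ q.2 :=
    intervalIntegral.continuous_parametric_intervalIntegral_of_continuous
      (f := fun (q : ℝ × ℝ) σ => p σ q.2)
      (hp.comp (by fun_prop : Continuous fun z : (ℝ × ℝ) × ℝ => (z.2, z.1.2))) continuous_fst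
  have := hasStrictFDerivAt_uncurry_coprod (𝕜 := ℝ) (u := (x, t))
    (f := fun x t => ∫ σ in (0:ℝ)..x, F σ t)
    (f₁ := fun x t => F x t • ContinuousLinearMap.id ℝ ℝ)
    (f₂ := fun x t => (∫ σ in (0:ℝ)..x, p σ t) • ContinuousLinearMap.id ℝ ℝ)
    (Eventually.of_forall fun v => by
      exact ((hFx v.2).integral_hasStrictDerivAt 0 v.1).hasDerivAt.hasFDerivAt.congr_fderiv
        (by ext; simp [Function.HasUncurry.uncurry]))
    (Eventually.of_forall fun v => by
      exact (hdt v.1 v.2).hasFDerivAt.congr_fderiv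
        (by ext; simp [Function.HasUncurry.uncurry]))
    (by exact (hF.smul continuous_const).continuousAt)
    (by exact (hPc.smul continuous_const).continuousAt)
  refine this.hasFDerivAt.congr_fderiv ?_
  ext <;> simp [Function.HasUncurry.uncurry]

/-- If `Ψ(·,t)` vanishes at `0` and expands distances on `[0,∞)` by at least `m > 0`, it has an
inverse `X(·,t)` there. The inverse is jointly continuous by the expansion bound, hence
differentiable within the half-strip by the inverse function rule applied to
`(x,t) ↦ (Ψ(x,t),t)`, with `∂_y X = 1/F` and `∂_t X = -P/F`. -/
theorem exists_inverse {T m : ℝ} (hm : 0 < m) {Ψ F P : ℝ → ℝ → ℝ}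
    (hΨ : ∀ x t, HasFDerivAt (fun q : ℝ × ℝ => Ψ q.1 q.2)
      (F x t • ContinuousLinearMap.fst ℝ ℝ ℝ + P x t • ContinuousLinearMap.snd ℝ ℝ ℝ) (x, t))
    (hF : ∀ x ≥ (0:ℝ), ∀ t ∈ Icc (0:ℝ) T, m ≤ F x t)
    (h0 : ∀ t, Ψ 0 t = 0)
    (hmono : ∀ t ∈ Icc (0:ℝ) T, ∀ x' ≥ (0:ℝ), ∀ x ≥ x', m * (x - x') ≤ Ψ x t - Ψ x' t) :
    ∃ X : ℝ → ℝ → ℝ, (∀ y ≥ (0:ℝ), ∀ t ∈ Icc (0:ℝ) T, 0 ≤ X y t ∧ Ψ (X y t) t = y) ∧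
      (∀ x ≥ (0:ℝ), ∀ t ∈ Icc (0:ℝ) T, X (Ψ x t) t = x) ∧
      ∀ y ≥ (0:ℝ), ∀ t ∈ Icc (0:ℝ) T, HasFDerivWithinAt (fun q : ℝ × ℝ => X q.1 q.2)
        ((F (X y t) t)⁻¹ • (ContinuousLinearMap.fst ℝ ℝ ℝ
          - P (X y t) t • ContinuousLinearMap.snd ℝ ℝ ℝ)) (Ici 0 ×ˢ Icc 0 T) (y, t) := by
  have hc : Continuous fun q : ℝ × ℝ => Ψ q.1 q.2 :=
    continuous_iff_continuousAt.2 fun q => (hΨ q.1 q.2).continuousAt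
  have hsurj : ∀ y t, ∃ x, 0 ≤ y → t ∈ Icc (0:ℝ) T → 0 ≤ x ∧ Ψ x t = y := by
    intro y t
    by_cases h : 0 ≤ y ∧ t ∈ Icc (0:ℝ) T
    · obtain ⟨hy, ht⟩ := h
      have h1 := hmono t ht 0 le_rfl (y / m) (by positivity)
      rw [h0, sub_zero, sub_zero, mul_div_cancel₀ _ hm.ne'] at h1
      obtain ⟨x, hx, hxy⟩ := intermediate_value_Icc (by positivity : 0 ≤ y / m)
        (f := fun x => Ψ x t) (hc.comp (Continuous.prodMk_left t)).continuousOn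
        (show y ∈ Icc (Ψ 0 t) (Ψ (y / m) t) from ⟨by rw [h0]; exact hy, h1⟩)
      exact ⟨x, fun _ _ => ⟨hx.1, hxy⟩⟩
    · exact ⟨0, fun a b => absurd ⟨a, b⟩ h⟩
  choose X hX using hsurj
  -- the expansion bound for arbitrary pairs, which makes the inverse `1/m`-Lipschitz in space
  have hlip : ∀ t ∈ Icc (0:ℝ) T, ∀ x ≥ (0:ℝ), ∀ x' ≥ (0:ℝ), m * |x - x'| ≤ |Ψ x t - Ψ x' t| := by
    intro t ht x hx x' hx'
    rcases le_total x' x with h | h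
    · rw [abs_of_nonneg (sub_nonneg.2 h)]
      exact (hmono t ht x' hx' x h).trans (le_abs_self _)
    · rw [abs_sub_comm, abs_sub_comm (Ψ x t), abs_of_nonneg (sub_nonneg.2 h)]
      exact (hmono t ht x hx x' h).trans (le_abs_self _)
  have hXc : ∀ y ≥ (0:ℝ), ∀ t ∈ Icc (0:ℝ) T,
      ContinuousWithinAt (fun q : ℝ × ℝ => X q.1 q.2) (Ici 0 ×ˢ Icc 0 T) (y, t) := by
    intro y hy t ht
    obtain ⟨hx0, hxy⟩ := hX y t hy ht
    rw [ContinuousWithinAt, tendsto_iff_dist_tendsto_zero]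
    have hlim : Tendsto (fun q : ℝ × ℝ => m⁻¹ * |q.1 - Ψ (X y t) q.2|)
        (𝓝[Ici 0 ×ˢ Icc 0 T] (y, t)) (𝓝 0) := by
      have : Continuous (fun q : ℝ × ℝ => m⁻¹ * |q.1 - Ψ (X y t) q.2|) := by
        have h2 : Continuous fun q : ℝ × ℝ => Ψ (X y t) q.2 :=
          hc.comp (by fun_prop : Continuous fun q : ℝ × ℝ => (X y t, q.2))
        fun_prop
      have h3 := this.tendsto (y, t)
      simp only [hxy, sub_self, abs_zero, mul_zero] at h3
      exact h3.mono_left nhdsWithin_le_nhds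
    refine squeeze_zero' (Eventually.of_forall fun _ => dist_nonneg) ?_ hlim
    filter_upwards [self_mem_nhdsWithin] with q hq
    obtain ⟨ha, hb⟩ := hX q.1 q.2 hq.1 hq.2
    have h4 := hlip q.2 hq.2 (X q.1 q.2) ha (X y t) hx0
    rw [hb] at h4
    rw [Real.dist_eq, inv_mul_eq_div, le_div_iff₀ hm, mul_comm]
    exact h4
  refine ⟨X, fun y hy t ht => hX y t hy ht, ?_, ?_⟩
  · intro x hx t ht
    have hy : 0 ≤ Ψ x t := by
      have := hmono t ht 0 le_rfl x hx
      rw [h0] at this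
      nlinarith [mul_nonneg hm.le hx]
    obtain ⟨ha, hb⟩ := hX (Ψ x t) t hy ht
    have := hlip t ht _ ha x hx
    rw [hb, sub_self, abs_zero] at this
    have h5 : |X (Ψ x t) t - x| ≤ 0 := by
      by_contra! h
      nlinarith [mul_pos hm h]
    exact sub_eq_zero.1 (abs_nonpos_iff.1 h5)
  · intro y hy t ht
    obtain ⟨hx0, hxy⟩ := hX y t hy ht
    have hFp : F (X y t) t ≠ 0 := (hm.trans_le (hF _ hx0 t ht)).ne'
    -- the derivative `(a, b) ↦ (F a + P b, b)` of `(x, t) ↦ (Ψ x t, t)`, which is invertible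
    let D : (ℝ × ℝ) ≃L[ℝ] (ℝ × ℝ) := ContinuousLinearEquiv.equivOfInverse
      ((F (X y t) t • ContinuousLinearMap.fst ℝ ℝ ℝ
          + P (X y t) t • ContinuousLinearMap.snd ℝ ℝ ℝ).prod
        (ContinuousLinearMap.snd ℝ ℝ ℝ))
      (((F (X y t) t)⁻¹ • (ContinuousLinearMap.fst ℝ ℝ ℝ
          - P (X y t) t • ContinuousLinearMap.snd ℝ ℝ ℝ)).prod (ContinuousLinearMap.snd ℝ ℝ ℝ))
      (fun v => by ext <;> simp; field_simp)
      (fun v => by ext <;> simp; field_simp; ring)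
    have hG : HasFDerivWithinAt (fun q : ℝ × ℝ => (X q.1 q.2, q.2))
        (D.symm : (ℝ × ℝ) →L[ℝ] (ℝ × ℝ)) (Ici 0 ×ˢ Icc 0 T) (y, t) := by
      refine HasFDerivWithinAt.of_local_left_inverse (t := univ)
        (f := fun q : ℝ × ℝ => (Ψ q.1 q.2, q.2)) ?_ ?_ ⟨hy, ht⟩ ?_
      · rw [nhdsWithin_univ]
        exact (hXc y hy t ht).prodMk continuousWithinAt_snd
      · exact ((hΨ (X y t) t).prodMk hasFDerivAt_snd).hasFDerivWithinAt
      · filter_upwards [self_mem_nhdsWithin] with q hq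
        exact Prod.ext (hX q.1 q.2 hq.1 hq.2).2 rfl
    exact hG.fst

/-! ### The velocity in Lagrangian coordinates -/

/-- The velocity in Lagrangian coordinates: two changes of variables `y = Ψ(x,t)` turn
`u(Ψ(x,t),t)` into `∫₀ˣ f(s) ∫_s^∞ g'(z)/Ψ(z,t) dz ds`. The change of variables formula used holds
without integrability assumptions (both sides are `0` when they fail). -/
theorem uVel_comp {θ Ψ : ℝ → ℝ → ℝ} {g f : ℝ → ℝ} {t : ℝ}
    (hd : ∀ x ≥ (0:ℝ), HasDerivAt (fun x => Ψ x t) (f x) x)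
    (hf : ∀ x ≥ (0:ℝ), 0 < f x)
    (h0 : Ψ 0 t = 0) (hmono : StrictMonoOn (fun x => Ψ x t) (Ici 0))
    (hsurj : ∀ y ≥ (0:ℝ), ∃ x ≥ (0:ℝ), Ψ x t = y)
    (hY : ∀ x ≥ (0:ℝ), thetaY θ (Ψ x t) t = gD g x / f x) {x : ℝ} (hx : 0 ≤ x) :
    uVel θ (Ψ x t) t = ∫ s in (0:ℝ)..x, f s * ∫ z in Ioi s, gD g z / Ψ z t := by
  have hnn : ∀ x ≥ (0:ℝ), 0 ≤ Ψ x t := fun x hx => by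
    have := hmono.monotoneOn (by simp) hx hx
    simpa [h0] using this
  have him1 : ∀ a ≥ (0:ℝ), (fun x => Ψ x t) '' Ioi a = Ioi (Ψ a t) := by
    intro a ha
    ext y
    constructor
    · rintro ⟨z, hz, rfl⟩
      exact hmono ha (ha.trans (le_of_lt hz)) hz
    · intro hy
      obtain ⟨z, hz, rfl⟩ := hsurj y ((hnn a ha).trans (le_of_lt hy))
      exact ⟨z, (hmono.lt_iff_lt ha hz).1 hy, rfl⟩
  have him2 : (fun x => Ψ x t) '' Ioc 0 x = Ioc 0 (Ψ x t) := by
    ext y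
    constructor
    · rintro ⟨z, hz, rfl⟩
      refine ⟨?_, hmono.monotoneOn hz.1.le hx hz.2⟩
      have := hmono (by simp) hz.1.le hz.1
      simpa [h0] using this
    · intro hy
      obtain ⟨z, hz, rfl⟩ := hsurj y hy.1.le
      refine ⟨z, ⟨(hmono.lt_iff_lt (by simp) hz).1 ?_, (hmono.le_iff_le hz hx).1 hy.2⟩, rfl⟩
      simpa [h0] using hy.1
  have hinner : ∀ a ≥ (0:ℝ), ∫ z in Ioi (Ψ a t), thetaY θ z t / z
      = ∫ z in Ioi a, gD g z / Ψ z t := by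
    intro a ha
    rw [← him1 a ha, integral_image_eq_integral_abs_deriv_smul measurableSet_Ioi
      (fun z hz => (hd z (ha.trans (le_of_lt hz))).hasDerivWithinAt)
      (hmono.injOn.mono (fun z hz => ha.trans (le_of_lt hz)))]
    refine setIntegral_congr_fun measurableSet_Ioi fun z hz => ?_
    have hz0 : 0 ≤ z := ha.trans (le_of_lt hz)
    have hfz := hf z hz0
    simp only [abs_of_pos hfz, hY z hz0, smul_eq_mul]
    field_simp
  rw [uVel, intervalIntegral.integral_of_le (hnn x hx), intervalIntegral.integral_of_le hx,
    ← him2, integral_image_eq_integral_abs_deriv_smul measurableSet_Ioc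
      (fun z hz => (hd z hz.1.le).hasDerivWithinAt)
      (hmono.injOn.mono (fun z hz => hz.1.le))]
  refine setIntegral_congr_fun measurableSet_Ioc fun z hz => ?_
  simp only [abs_of_pos (hf z hz.1.le), smul_eq_mul, hinner z hz.1.le]

/-! ### Back to the Eulerian variable -/

/-- Lemma `backToTheta`: if `φ` is a `C¹` solution of the flow-map equation
with admissible data `(φ₀, g)` chosen so that `θ₀(Φ₀(x)) = g(x)` (i.e. `θ₀ = g ∘ Φ₀⁻¹`),
and `inf φ > 0`, then `θ(y,t) = g(Φ⁻¹(y,t))` (characterized by `θ(Φ(x,t),t) = g(x)`)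
lies in the solution class, solves the model equation, and satisfies `θ(·,0) = θ₀`. -/
theorem statement2 (θ₀ φ₀ g : ℝ → ℝ) (φ : ℝ → ℝ → ℝ) (T : ℝ) (hT : 0 < T)
    (hθ₀reg : ContDiffOn ℝ 2 θ₀ (Set.Ici 0))
    (hθ₀supp : ∃ a : ℝ, ∀ y ≥ a, θ₀ y = 0)
    (hθ₀der : derivWithin θ₀ (Set.Ici 0) 0 = 0)
    (hadm : AdmissibleData φ₀ g)
    (hsol : IsFlowMapSolution φ₀ g φ (Set.Icc 0 T))
    (hdata : ∀ x ≥ (0:ℝ), θ₀ (∫ σ in (0:ℝ)..x, φ₀ σ) = g x)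
    (hinf : PosInfOn φ (Set.Icc 0 T))
    (θ : ℝ → ℝ → ℝ)
    (hθ : ∀ t ∈ Set.Icc (0:ℝ) T, ∀ x ≥ (0:ℝ), θ (Phi φ x t) t = g x) :
    InSolutionClass θ (Set.Icc 0 T) ∧
    SolvesModel θ (Set.Icc 0 T) ∧
    ∀ y ≥ (0:ℝ), θ y 0 = θ₀ y := by
  obtain ⟨-, hg, ⟨a, hga⟩, -, hg0⟩ := hadm
  obtain ⟨hφ, hφ0, hφt⟩ := hsol
  obtain ⟨m, hm, hφm⟩ := hinf
  obtain ⟨F, p, hF, hp, hFp, hFφ⟩ := exists_extension_s2 hT hφ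
  set S : Set (ℝ × ℝ) := Ici 0 ×ˢ Icc 0 T with hSdef
  have hS : UniqueDiffOn ℝ S := (uniqueDiffOn_Ici 0).prod (uniqueDiffOn_Icc hT)
  have hI : UniqueDiffOn ℝ (Ici (0:ℝ)) := uniqueDiffOn_Ici 0
  set Ψ : ℝ → ℝ → ℝ := fun x t => ∫ σ in (0:ℝ)..x, F σ t with hΨdef
  set P : ℝ → ℝ → ℝ := fun x t => ∫ σ in (0:ℝ)..x, p σ t with hPdef
  have hΨ := fun x t => hasFDerivAt_primitive hF hp hFp x t
  have hFx : ∀ t, Continuous fun x => F x t := fun t => hF.comp (Continuous.prodMk_left t)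
  have hPc : Continuous fun q : ℝ × ℝ => P q.1 q.2 :=
    intervalIntegral.continuous_parametric_intervalIntegral_of_continuous
      (f := fun (q : ℝ × ℝ) σ => p σ q.2)
      (hp.comp (by fun_prop : Continuous fun z : (ℝ × ℝ) × ℝ => (z.2, z.1.2))) continuous_fst
  have hΨΦ : ∀ x ≥ (0:ℝ), ∀ t ∈ Icc (0:ℝ) T, Phi φ x t = Ψ x t := by
    intro x hx t ht
    refine intervalIntegral.integral_congr fun σ hσ => ?_
    rw [uIcc_of_le hx] at hσ
    exact (hFφ σ hσ.1 t ht).symm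
  have hFm : ∀ x ≥ (0:ℝ), ∀ t ∈ Icc (0:ℝ) T, m ≤ F x t := fun x hx t ht =>
    (hφm x hx t ht).trans_eq (hFφ x hx t ht).symm
  have hΨ0 : ∀ t, Ψ 0 t = 0 := fun t => intervalIntegral.integral_same
  have hmono : ∀ t ∈ Icc (0:ℝ) T, ∀ x' ≥ (0:ℝ), ∀ x ≥ x', m * (x - x') ≤ Ψ x t - Ψ x' t := by
    intro t ht x' hx' x hx
    have h1 := intervalIntegral.integral_interval_sub_left
      ((hFx t).intervalIntegrable (μ := volume) 0 x) ((hFx t).intervalIntegrable 0 x')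
    have h2 := intervalIntegral.integral_mono_on hx (continuous_const.intervalIntegrable
      (μ := volume) x' x : IntervalIntegrable (fun _ => m) volume x' x)
      ((hFx t).intervalIntegrable x' x) (fun σ hσ => hFm σ (hx'.trans hσ.1) t ht)
    rw [intervalIntegral.integral_const, smul_eq_mul, mul_comm] at h2
    exact h2.trans_eq h1.symm
  obtain ⟨X, hX, hXl, hXd⟩ := exists_inverse hm hΨ hFm hΨ0 hmono
  have hθX : ∀ y ≥ (0:ℝ), ∀ t ∈ Icc (0:ℝ) T, θ y t = g (X y t) := by
    intro y hy t ht
    obtain ⟨h1, h2⟩ := hX y hy t ht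
    have := hθ t ht _ h1
    rwa [hΨΦ _ h1 t ht, h2] at this
  have hXc : ContinuousOn (fun q : ℝ × ℝ => X q.1 q.2) S := fun q hq =>
    (hXd q.1 hq.1 q.2 hq.2).continuousWithinAt
  have hXmap : MapsTo (fun q : ℝ × ℝ => X q.1 q.2) S (Ici 0) := fun q hq =>
    (hX q.1 hq.1 q.2 hq.2).1
  have hXSmap : MapsTo (fun q : ℝ × ℝ => (X q.1 q.2, q.2)) S S := fun q hq =>
    ⟨hXmap hq, hq.2⟩
  have hXSc : ContinuousOn (fun q : ℝ × ℝ => (X q.1 q.2, q.2)) S := hXc.prodMk continuousOn_snd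
  have hne : ∀ q ∈ S, F (X q.1 q.2) q.2 ≠ 0 := fun q hq =>
    (hm.trans_le (hFm _ (hXmap hq) _ hq.2)).ne'
  have hFXc : ContinuousOn (fun q : ℝ × ℝ => F (X q.1 q.2) q.2) S :=
    hF.comp_continuousOn hXSc
  have hPXc : ContinuousOn (fun q : ℝ × ℝ => P (X q.1 q.2) q.2) S :=
    hPc.comp_continuousOn hXSc
  -- the derivatives of `g` up to order two
  have hgd : ∀ x ≥ (0:ℝ), HasDerivWithinAt g (gD g x) (Ici 0) x := fun x hx =>
    (hg.differentiableOn (by simp) x hx).hasDerivWithinAt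
  have hg1 : ContDiffOn ℝ 1 (gD g) (Ici 0) :=
    ((contDiffOn_succ_iff_derivWithin (n := 1) hI).1
      (by rw [one_add_one_eq_two]; exact hg)).2.2
  have hgdc : ContinuousOn (gD g) (Ici 0) := hg1.continuousOn
  have hg2d : ∀ x ≥ (0:ℝ),
      HasDerivWithinAt (gD g) (derivWithin (gD g) (Ici 0) x) (Ici 0) x := fun x hx =>
    (hg1.differentiableOn (by simp) x hx).hasDerivWithinAt
  have hg2c : ContinuousOn (derivWithin (gD g) (Ici 0)) (Ici 0) :=
    ((contDiffOn_one_iff_derivWithin hI).1 hg1).2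
  have hgXc : ContinuousOn (fun q : ℝ × ℝ => gD g (X q.1 q.2)) S := hgdc.comp hXc hXmap
  -- the differential of `θ`
  have hθd : ∀ q ∈ S, HasFDerivWithinAt (fun q : ℝ × ℝ => θ q.1 q.2)
      (gD g (X q.1 q.2) • (F (X q.1 q.2) q.2)⁻¹ • (ContinuousLinearMap.fst ℝ ℝ ℝ
          - P (X q.1 q.2) q.2 • ContinuousLinearMap.snd ℝ ℝ ℝ)) S q := by
    intro q hq
    have h1 := (hgd _ (hXmap hq)).comp_hasFDerivWithinAt q (hXd q.1 hq.1 q.2 hq.2) hXmap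
    exact h1.congr (fun r hr => hθX r.1 hr.1 r.2 hr.2) (hθX q.1 hq.1 q.2 hq.2)
  have hslice : ∀ t ∈ Icc (0:ℝ) T, ∀ y ≥ (0:ℝ), ∀ {f : ℝ × ℝ → ℝ} {f' : ℝ × ℝ →L[ℝ] ℝ},
      HasFDerivWithinAt f f' S (y, t) →
      HasDerivWithinAt (fun w => f (w, t)) (f' (1, 0)) (Ici 0) y := by
    intro t ht y hy f f' h
    exact h.comp_hasDerivWithinAt y
      ((hasDerivWithinAt_id _ _).prodMk (hasDerivWithinAt_const _ _ _)) (fun w hw => (⟨hw, ht⟩ : (w, t) ∈ S))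
  have hXy : ∀ t ∈ Icc (0:ℝ) T, ∀ y ≥ (0:ℝ),
      HasDerivWithinAt (fun w => X w t) (F (X y t) t)⁻¹ (Ici 0) y := by
    intro t ht y hy
    simpa using hslice t ht y hy (hXd y hy t ht)
  have hθy : ∀ t ∈ Icc (0:ℝ) T, ∀ y ≥ (0:ℝ),
      HasDerivWithinAt (fun w => θ w t) (gD g (X y t) / F (X y t) t) (Ici 0) y := by
    intro t ht y hy
    simpa [div_eq_mul_inv] using hslice t ht y hy (hθd (y, t) ⟨hy, ht⟩)
  have hthY : ∀ t ∈ Icc (0:ℝ) T, ∀ y ≥ (0:ℝ),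
      thetaY θ y t = gD g (X y t) / F (X y t) t := fun t ht y hy =>
    (hθy t ht y hy).derivWithin (hI y hy)
  -- the space derivative of `φ`, which carries the second space derivative of `θ`
  set q1 : ℝ × ℝ → ℝ := fun r => fderivWithin ℝ (fun p : ℝ × ℝ => φ p.1 p.2) S r (1, 0) with hq1
  have hq1c : ContinuousOn q1 S :=
    (hφ.continuousOn_fderivWithin hS le_rfl).clm_apply continuousOn_const
  have hFy : ∀ t ∈ Icc (0:ℝ) T, ∀ x ≥ (0:ℝ),
      HasDerivWithinAt (fun x => F x t) (q1 (x, t)) (Ici 0) x := by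
    intro t ht x hx
    have h1 := hslice t ht x hx
      (hφ.differentiableOn (by simp) (x, t) ⟨hx, ht⟩).hasFDerivWithinAt
    exact h1.congr (fun z hz => hFφ z hz t ht) (hFφ x hx t ht)
  have hθyy : ∀ t ∈ Icc (0:ℝ) T, ∀ y ≥ (0:ℝ), HasDerivWithinAt (fun w => thetaY θ w t)
      ((derivWithin (gD g) (Ici 0) (X y t) * (F (X y t) t)⁻¹ * F (X y t) t
        - gD g (X y t) * (q1 (X y t, t) * (F (X y t) t)⁻¹)) / F (X y t) t ^ 2) (Ici 0) y := by
    intro t ht y hy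
    have hm1 : MapsTo (fun w => X w t) (Ici 0) (Ici 0) := fun w hw => (hX w hw t ht).1
    have h1 := (hg2d _ (hm1 hy)).comp y (hXy t ht y hy) hm1
    have h2 := (hFy t ht _ (hm1 hy)).comp y (hXy t ht y hy) hm1
    exact (h1.div h2 (hne (y, t) ⟨hy, ht⟩)).congr (fun w hw => hthY t ht w hw) (hthY t ht y hy)
  have hθyc : ContinuousOn (fun p : ℝ × ℝ => thetaY θ p.1 p.2) S :=
    (hgXc.div hFXc hne).congr fun q hq => hthY q.2 hq.2 q.1 hq.1
  have hθyyc : ContinuousOn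
      (fun p : ℝ × ℝ => derivWithin (fun w => thetaY θ w p.2) (Ici 0) p.1) S := by
    have h1 : ContinuousOn (fun q : ℝ × ℝ => derivWithin (gD g) (Ici 0) (X q.1 q.2)) S :=
      hg2c.comp hXc hXmap
    have h2 : ContinuousOn (fun q : ℝ × ℝ => q1 (X q.1 q.2, q.2)) S := hq1c.comp hXSc hXSmap
    have hFi := hFXc.inv₀ hne
    refine ((((h1.mul hFi).mul hFXc).sub (hgXc.mul (h2.mul hFi))).div (hFXc.pow 2)
      fun q hq => pow_ne_zero 2 (hne q hq)).congr fun q hq => ?_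
    exact (hθyy q.2 hq.2 q.1 hq.1).derivWithin (hI _ hq.1)
  -- the velocity is the time derivative of the flow map
  have hu : ∀ t ∈ Icc (0:ℝ) T, ∀ y ≥ (0:ℝ), uVel θ y t = P (X y t) t := by
    intro t ht y hy
    obtain ⟨hx, hxy⟩ := hX y hy t ht
    have h1 := uVel_comp (θ := θ) (Ψ := Ψ) (g := g) (f := fun x => F x t) (t := t)
      (fun x _ => ((hFx t).integral_hasStrictDerivAt 0 x).hasDerivAt)
      (fun x hx => hm.trans_le (hFm x hx t ht)) (hΨ0 t)
      (fun x' hx' x hx h => by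
        have := hmono t ht x' hx' x h.le
        have h3 := mul_pos hm (sub_pos.2 h)
        show Ψ x' t < Ψ x t
        linarith)
      (fun y hy => ⟨X y t, hX y hy t ht⟩)
      (fun x hx => by
        have hnn : 0 ≤ Ψ x t := by
          have := hmono t ht 0 le_rfl x hx
          rw [hΨ0] at this
          nlinarith [mul_nonneg hm.le hx]
        rw [hthY t ht _ hnn, hXl x hx t ht]) hx
    rw [hxy] at h1
    rw [h1]
    refine intervalIntegral.integral_congr fun s hs => ?_
    rw [uIcc_of_le hx] at hs
    have hs0 : 0 ≤ s := hs.1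
    have h2 : HasDerivWithinAt (fun τ => F s τ)
        (φ s t * ∫ z in Ioi s, gD g z / Phi φ z t) (Icc 0 T) t :=
      (hφt s hs0 t ht).congr (fun τ hτ => hFφ s hs0 τ hτ) (hFφ s hs0 t ht)
    -- the flow-map equation identifies `p` on the half-strip
    have h3 := (uniqueDiffOn_Icc hT t ht).eq_deriv _ (hFp s t).hasDerivWithinAt h2
    have h4 : ∫ z in Ioi s, gD g z / Phi φ z t = ∫ z in Ioi s, gD g z / Ψ z t :=
      setIntegral_congr_fun measurableSet_Ioi fun z hz => by
        simp only [hΨΦ z (hs0.trans (le_of_lt hz)) t ht]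
    simp only [h3, h4, hFφ s hs0 t ht]
  refine ⟨⟨?_, ?_, ?_, hθyc, hθyyc, ?_⟩, ?_, ?_⟩
  · refine (contDiffOn_succ_iff_fderivWithin (n := 0) hS).2
      ⟨fun q hq => (hθd q hq).differentiableWithinAt, by simp, contDiffOn_zero.2 ?_⟩
    refine (hgXc.smul ((hFXc.inv₀ hne).smul
      ((continuousOn_const (c := ContinuousLinearMap.fst ℝ ℝ ℝ)).sub
        (hPXc.smul (continuousOn_const (c := ContinuousLinearMap.snd ℝ ℝ ℝ)))))).congr fun q hq => ?_
    exact (hθd q hq).fderivWithin (hS q hq)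
  · intro t ht
    rw [← one_add_one_eq_two]
    refine (contDiffOn_succ_iff_derivWithin (n := 1) hI).2
      ⟨fun y hy => (hθy t ht y hy).differentiableWithinAt, by simp, ?_⟩
    refine (contDiffOn_one_iff_derivWithin hI).2
      ⟨fun y hy => (hθyy t ht y hy).differentiableWithinAt, ?_⟩
    exact hθyyc.comp (f := fun y : ℝ => (y, t)) (by fun_prop) fun y hy => ⟨hy, ht⟩
  · intro t ht
    refine ⟨Ψ (max a 0) t, fun y hy => ?_⟩
    have h0 : 0 ≤ Ψ (max a 0) t := by
      have := hmono t ht 0 le_rfl (max a 0) (le_max_right _ _)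
      rw [hΨ0] at this
      nlinarith [mul_nonneg hm.le (le_max_right a 0)]
    have hy0 : 0 ≤ y := h0.trans hy
    obtain ⟨hx, hxy⟩ := hX y hy0 t ht
    rw [hθX y hy0 t ht]
    refine hga _ ((le_max_left a 0).trans ?_)
    by_contra! hlt
    have := hmono t ht _ hx _ hlt.le
    have h3 := mul_pos hm (sub_pos.2 hlt)
    linarith [show Ψ (max a 0) t ≤ y from hy]
  · intro t ht
    have hX0 : X 0 t = 0 := by
      have := hXl 0 le_rfl t ht
      rwa [hΨ0] at this
    rw [hthY t ht 0 le_rfl, hX0, hg0, zero_div]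
  · intro y hy t ht
    have h1 := (hθd (y, t) ⟨hy, ht⟩).comp_hasDerivWithinAt t
      ((hasDerivWithinAt_const _ _ _).prodMk (hasDerivWithinAt_id _ _))
      (fun s hs => (⟨hy, hs⟩ : (y, s) ∈ S))
    refine h1.congr_deriv ?_
    rw [hu t ht y hy, hthY t ht y hy]
    simp [div_eq_mul_inv]
    ring
  · intro y hy
    have h0T : (0:ℝ) ∈ Icc (0:ℝ) T := ⟨le_rfl, hT.le⟩
    obtain ⟨hx, hxy⟩ := hX y hy 0 h0T
    rw [hθX y hy 0 h0T, ← hdata _ hx]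
    congr 1
    rw [← hxy, hXl _ hx 0 h0T]
    refine intervalIntegral.integral_congr fun σ hσ => ?_
    rw [uIcc_of_le hx] at hσ
    simp only [hFφ σ hσ.1 0 h0T, hφ0 σ hσ.1]
end

section
/- Suppose (φ₀, g) are admissible data for the flow-map equation with g(0) > 0. Then there is no solution φ ∈ C¹(ℝ⁺ × [0,∞)) of the flow-map equation, defined for all times, such that inf_{(x,t) ∈ ℝ⁺×[0,T]} φ(x,t) > 0 for every T > 0. -/
/-!
The obstruction lies in `Φ(a,t)`, where `g` vanishes on `[a, ∞)`. Writing
`K(x) = ∫_x^∞ g'/Φ` at a fixed time, one has `(Φ K + g)' = φ K`, because `Φ' = φ` and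
`Φ K' = -g'`. Since `Φ(0) = 0` and `K(a) = g(a) = 0`, integration over `[0, a]` gives
`∫_0^a φ K = -g(0)`. By the flow-map equation the left side is `∂ₜ Φ(a,t)`, so `Φ(a,t)` decreases
linearly at rate `g(0) > 0`; this is incompatible with `Φ(a,t) > 0` for all times.

The analytic input is that `g'/Φ` is bounded near `z = 0`: `g'` is Lipschitz with `g'(0) = 0`, so
`|g'(z)| ≤ C z`, while `Φ(z,t) ≥ m z` with `m` a positive lower bound for `φ`. This yields the
integrability needed for `K` and, as the bound is uniform on compact time intervals, the
differentiation under the integral sign.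
-/

open Set MeasureTheory Filter Topology

section Slice

variable {g f : ℝ → ℝ} {a m C : ℝ}

lemma slice_intervalIntegrable (hf : ContinuousOn f (Ici 0)) {x y : ℝ} (hx : 0 ≤ x) (hy : 0 ≤ y) :
    IntervalIntegrable f volume x y :=
  (hf.mono fun _ hz => (le_min hx hy).trans hz.1).intervalIntegrable

lemma slice_lower (hf : ContinuousOn f (Ici 0)) (hm : ∀ x ≥ (0:ℝ), m ≤ f x) {z : ℝ} (hz : 0 ≤ z) :
    m * z ≤ ∫ σ in (0:ℝ)..z, f σ := by
  have h := intervalIntegral.integral_mono_on hz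
    (intervalIntegrable_const (c := m) (μ := volume))
    (slice_intervalIntegrable hf le_rfl hz) (fun x hx => hm x hx.1)
  simp only [intervalIntegral.integral_const, smul_eq_mul] at h
  linarith

lemma slice_bound (hf : ContinuousOn f (Ici 0)) (hm0 : 0 < m) (hm : ∀ x ≥ (0:ℝ), m ≤ f x)
    (hC : 0 ≤ C) (hgC : ∀ z ∈ Icc 0 a, |gD g z| ≤ C * z) {z : ℝ} (hz : z ∈ Ioc 0 a) :
    ‖gD g z / ∫ σ in (0:ℝ)..z, f σ‖ ≤ C / m := by
  have h1 := slice_lower hf hm hz.1.le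
  have h2 : 0 < m * z := mul_pos hm0 hz.1
  rw [Real.norm_eq_abs, abs_div, abs_of_pos (h2.trans_le h1), div_le_div_iff₀ (h2.trans_le h1) hm0]
  calc |gD g z| * m ≤ C * z * m := by
        gcongr; exact hgC z ⟨hz.1.le, hz.2⟩
    _ = C * (m * z) := by ring
    _ ≤ _ := by gcongr

lemma slice_primitive_continuousOn (hf : ContinuousOn f (Ici 0)) (ha : 0 ≤ a) :
    ContinuousOn (fun z => ∫ σ in (0:ℝ)..z, f σ) (Icc 0 a) := by
  have := intervalIntegral.continuousOn_primitive_interval (μ := volume) (f := f) (a := 0) (b := a)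
    (by rw [uIcc_of_le ha]; exact (hf.mono Icc_subset_Ici_self).integrableOn_Icc)
  rwa [uIcc_of_le ha] at this

lemma slice_quot_continuousOn (hf : ContinuousOn f (Ici 0)) (hm0 : 0 < m)
    (hm : ∀ x ≥ (0:ℝ), m ≤ f x) (ha : 0 ≤ a) (hgc : ContinuousOn (gD g) (Ici 0)) :
    ContinuousOn (fun z => gD g z / ∫ σ in (0:ℝ)..z, f σ) (Ioc 0 a) := by
  refine (hgc.mono fun z hz => hz.1.le).div
    ((slice_primitive_continuousOn hf ha).mono Ioc_subset_Icc_self) fun z hz => ?_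
  exact ((mul_pos hm0 hz.1).trans_le (slice_lower hf hm hz.1.le)).ne'

lemma slice_quot_integrableOn (hf : ContinuousOn f (Ici 0)) (hm0 : 0 < m)
    (hm : ∀ x ≥ (0:ℝ), m ≤ f x) (ha : 0 ≤ a) (hgc : ContinuousOn (gD g) (Ici 0))
    (hC : 0 ≤ C) (hgC : ∀ z ∈ Icc 0 a, |gD g z| ≤ C * z) :
    IntegrableOn (fun z => gD g z / ∫ σ in (0:ℝ)..z, f σ) (Icc 0 a) := by
  rw [integrableOn_Icc_iff_integrableOn_Ioc]
  refine IntegrableOn.of_bound (by simp)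
    ((slice_quot_continuousOn hf hm0 hm ha hgc).aestronglyMeasurable measurableSet_Ioc) (C / m) ?_
  exact (ae_restrict_mem measurableSet_Ioc).mono fun z hz => slice_bound hf hm0 hm hC hgC hz

lemma gD_eq_zero (ha : 0 ≤ a) (hga : ∀ z ≥ a, g z = 0) {z : ℝ} (hz : a < z) : gD g z = 0 := by
  rw [gD, derivWithin_of_mem_nhds (Ici_mem_nhds (ha.trans_lt hz))]
  have : g =ᶠ[𝓝 z] fun _ => 0 := by
    filter_upwards [Ioi_mem_nhds hz] with y hy using hga y (le_of_lt hy)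
  rw [this.deriv_eq]; simp

lemma slice_tail (ha : 0 ≤ a) (hga : ∀ z ≥ a, g z = 0) (F : ℝ → ℝ) {x : ℝ} (hx : x ≤ a) :
    ∫ z in Ioi x, gD g z / F z = ∫ z in x..a, gD g z / F z := by
  rw [intervalIntegral.integral_of_le hx]
  refine setIntegral_eq_of_subset_of_forall_sdiff_eq_zero measurableSet_Ioi
    (fun z hz => hz.1) fun z hz => ?_
  have : a < z := by
    by_contra! h
    exact hz.2 ⟨hz.1, h⟩
  rw [gD_eq_zero ha hga this, zero_div]

lemma slice_K_continuousOn (hf : ContinuousOn f (Ici 0)) (hm0 : 0 < m)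
    (hm : ∀ x ≥ (0:ℝ), m ≤ f x) (ha : 0 ≤ a) (hgc : ContinuousOn (gD g) (Ici 0))
    (hC : 0 ≤ C) (hgC : ∀ z ∈ Icc 0 a, |gD g z| ≤ C * z) :
    ContinuousOn (fun x => ∫ z in x..a, gD g z / ∫ σ in (0:ℝ)..z, f σ) (Icc 0 a) := by
  have h := slice_quot_integrableOn hf hm0 hm ha hgc hC hgC
  rw [← uIcc_of_le ha] at h ⊢
  exact intervalIntegral.continuousOn_primitive_interval_left h

lemma slice_K_bound (hf : ContinuousOn f (Ici 0)) (hm0 : 0 < m)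
    (hm : ∀ x ≥ (0:ℝ), m ≤ f x)
    (hC : 0 ≤ C) (hgC : ∀ z ∈ Icc 0 a, |gD g z| ≤ C * z) {x : ℝ} (hx : x ∈ Icc 0 a) :
    ‖∫ z in x..a, gD g z / ∫ σ in (0:ℝ)..z, f σ‖ ≤ C / m * a := by
  refine (intervalIntegral.norm_integral_le_of_norm_le_const (C := C / m) fun z hz => ?_).trans ?_
  · rw [uIoc_of_le hx.2] at hz
    exact slice_bound hf hm0 hm hC hgC ⟨hx.1.trans_lt hz.1, hz.2⟩
  · have h1 := hx.1
    rw [abs_of_nonneg (by linarith [hx.2])]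
    gcongr
    linarith

/-- The rate of change of `Φ(a, ·)`: since `Φ K + g` is a primitive of `φ K`, its total variation
over `[0, a]` reduces to the boundary values of `g`. -/
lemma slice_rate (hf : ContinuousOn f (Ici 0)) (hm0 : 0 < m)
    (hm : ∀ x ≥ (0:ℝ), m ≤ f x) (ha : 0 ≤ a) (hg : DifferentiableOn ℝ g (Ici 0))
    (hga : ∀ z ≥ a, g z = 0) (hgc : ContinuousOn (gD g) (Ici 0))
    (hC : 0 ≤ C) (hgC : ∀ z ∈ Icc 0 a, |gD g z| ≤ C * z) :
    ∫ x in (0:ℝ)..a, f x * ∫ z in x..a, gD g z / ∫ σ in (0:ℝ)..z, f σ = - g 0 := by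
  have hKc := slice_K_continuousOn hf hm0 hm ha hgc hC hgC
  have hΦc := slice_primitive_continuousOn hf ha
  have hq := slice_quot_integrableOn hf hm0 hm ha hgc hC hgC
  have hqc := slice_quot_continuousOn hf hm0 hm ha hgc (g := g)
  have hfc : ContinuousOn f (Icc 0 a) := hf.mono Icc_subset_Ici_self
  have key := intervalIntegral.integral_eq_sub_of_hasDerivAt_of_le ha
    (f := fun x => (∫ σ in (0:ℝ)..x, f σ) * (∫ z in x..a, gD g z / ∫ σ in (0:ℝ)..z, f σ) + g x)
    (f' := fun x => f x * ∫ z in x..a, gD g z / ∫ σ in (0:ℝ)..z, f σ)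
    ((hΦc.mul hKc).add (hg.continuousOn.mono Icc_subset_Ici_self)) (fun x hx => ?_)
    (by
      apply ContinuousOn.intervalIntegrable
      rw [uIcc_of_le ha]
      exact hfc.mul hKc)
  · rw [key]
    simp [hga a le_rfl]
  · have hxI : Ici (0:ℝ) ∈ 𝓝 x := Ici_mem_nhds hx.1
    have hΦpos : 0 < ∫ σ in (0:ℝ)..x, f σ :=
      (mul_pos hm0 hx.1).trans_le (slice_lower hf hm hx.1.le)
    have hΦ : HasDerivAt (fun x => ∫ σ in (0:ℝ)..x, f σ) (f x) x :=
      intervalIntegral.integral_hasDerivAt_right (slice_intervalIntegrable hf le_rfl hx.1.le)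
        ((hf.mono Ioi_subset_Ici_self).stronglyMeasurableAtFilter isOpen_Ioi x hx.1)
        (hf.continuousAt hxI)
    have hqo := hqc.mono Ioo_subset_Ioc_self
    have hK := intervalIntegral.integral_hasDerivAt_left (a := x) (b := a)
      (f := fun z => gD g z / ∫ σ in (0:ℝ)..z, f σ)
      ((intervalIntegrable_iff_integrableOn_Icc_of_le hx.2.le).2
        (hq.mono_set (Icc_subset_Icc_left hx.1.le)))
      (hqo.stronglyMeasurableAtFilter isOpen_Ioo x hx)
      (hqo.continuousAt (isOpen_Ioo.mem_nhds hx))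
    have hgx : HasDerivAt g (gD g x) x := (hg x hx.1.le).hasDerivWithinAt.hasDerivAt hxI
    refine ((hΦ.mul hK).add hgx).congr_deriv ?_
    field_simp
    ring

end Slice

/-- `Φ(a,t)` decreases at the constant rate `g(0)`: differentiate under the integral sign and apply
`slice_rate` at time `t`. -/
lemma Phi_hasDerivAt {φ₀ g : ℝ → ℝ} {φ : ℝ → ℝ → ℝ} {a C : ℝ} (ha : 0 ≤ a)
    (hg : DifferentiableOn ℝ g (Ici 0))
    (hga : ∀ z ≥ a, g z = 0) (hgc : ContinuousOn (gD g) (Ici 0))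
    (hC : 0 ≤ C) (hgC : ∀ z ∈ Icc 0 a, |gD g z| ≤ C * z)
    (hφ : IsFlowMapSolution φ₀ g φ (Ici 0)) (hpos : ∀ T > (0:ℝ), PosInfOn φ (Icc 0 T))
    {t : ℝ} (ht : 0 < t) : HasDerivAt (fun s => Phi φ a s) (- g 0) t := by
  obtain ⟨hsm, -, hde⟩ := hφ
  obtain ⟨m, hm0, hm⟩ := hpos (t + 1) (by linarith)
  have hcont : ContinuousOn (fun p : ℝ × ℝ => φ p.1 p.2) (Ici 0 ×ˢ Ici 0) := hsm.continuousOn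
  have hsl : ∀ s ≥ (0:ℝ), ContinuousOn (fun x => φ x s) (Ici 0) := fun s hs =>
    hcont.comp (f := fun x => (x, s)) (by fun_prop) fun x hx => ⟨hx, hs⟩
  obtain ⟨B, hB⟩ := (isCompact_Icc.prod isCompact_Icc : IsCompact (Icc 0 a ×ˢ Icc 0 (t + 1)))
    |>.exists_bound_of_continuousOn (hcont.mono (prod_mono Icc_subset_Ici_self Icc_subset_Ici_self))
  have hnhds : Ioo 0 (t + 1) ∈ 𝓝 t := Ioo_mem_nhds ht (by linarith)
  have hrate := slice_rate (hsl t ht.le) hm0 (fun x hx => hm x hx t ⟨ht.le, by linarith⟩) ha hg hga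
    hgc hC hgC
  rw [← hrate]
  refine (intervalIntegral.hasDerivAt_integral_of_dominated_loc_of_deriv_le
    (F := fun s x => φ x s)
    (F' := fun s x => φ x s * ∫ z in x..a, gD g z / ∫ σ in (0:ℝ)..z, φ σ s)
    (bound := fun _ => B * (C / m * a)) hnhds ?_ ?_ ?_ ?_ ?_ ?_).2
  · filter_upwards [hnhds] with s hs
    rw [uIoc_of_le ha]
    exact ((hsl s hs.1.le).mono fun x hx => hx.1.le).aestronglyMeasurable measurableSet_Ioc
  · exact slice_intervalIntegrable (hsl t ht.le) le_rfl ha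
  · rw [uIoc_of_le ha]
    refine ContinuousOn.aestronglyMeasurable ?_ measurableSet_Ioc
    exact ((hsl t ht.le).mono fun x hx => hx.1.le).mul
      ((slice_K_continuousOn (hsl t ht.le) hm0 (fun x hx => hm x hx t ⟨ht.le, by linarith⟩) ha
        hgc hC hgC).mono Ioc_subset_Icc_self)
  · refine ae_of_all _ fun x hx s hs => ?_
    rw [uIoc_of_le ha] at hx
    have hs' : s ∈ Icc 0 (t + 1) := Ioo_subset_Icc_self hs
    have hx' : x ∈ Icc 0 a := Ioc_subset_Icc_self hx
    have h1 := hB (x, s) ⟨hx', hs'⟩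
    rw [norm_mul]
    exact mul_le_mul h1 (slice_K_bound (hsl s hs'.1) hm0 (fun x hx => hm x hx s hs') hC hgC hx')
      (norm_nonneg _) ((norm_nonneg _).trans h1)
  · exact intervalIntegrable_const
  · refine ae_of_all _ fun x hx s hs => ?_
    rw [uIoc_of_le ha] at hx
    have h := (hde x hx.1.le s hs.1.le).hasDerivAt (Ici_mem_nhds hs.1)
    rwa [slice_tail ha hga (fun z => Phi φ z s) hx.2] at h

/-- no global solution. If `(φ₀, g)` are admissible data with `g(0) > 0`,
there is no solution `φ ∈ C¹(ℝ⁺ × [0,∞))` of the flow-map equation with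
`inf_{ℝ⁺×[0,T]} φ > 0` for every `T > 0`. -/
theorem statement3 (φ₀ g : ℝ → ℝ)
    (hadm : AdmissibleData φ₀ g) (hg0 : 0 < g 0) :
    ¬ ∃ φ : ℝ → ℝ → ℝ,
        IsFlowMapSolution φ₀ g φ (Set.Ici 0) ∧
        ∀ T > (0:ℝ), PosInfOn φ (Set.Icc 0 T) := by
  rintro ⟨φ, hφ, hpos⟩
  obtain ⟨-, hg2, ⟨a, hga⟩, -, hgD0⟩ := hadm
  have ha : 0 < a := by
    by_contra! h
    exact hg0.ne' (hga 0 h)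
  have hgD : ContDiffOn ℝ 1 (gD g) (Ici 0) :=
    hg2.derivWithin (uniqueDiffOn_Ici 0) (by norm_num)
  obtain ⟨C, hC⟩ := (hgD.mono Icc_subset_Ici_self).exists_lipschitzOnWith one_ne_zero
    (convex_Icc 0 a) isCompact_Icc
  have hgC : ∀ z ∈ Icc 0 a, |gD g z| ≤ C * z := fun z hz => by
    have := hC.dist_le_mul z hz 0 ⟨le_rfl, ha.le⟩
    simpa [Real.dist_eq, hgD0, abs_of_nonneg hz.1] using this
  have hder : ∀ t > (0:ℝ), HasDerivAt (fun s => Phi φ a s + g 0 * s) 0 t := fun t ht => by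
    have h := Phi_hasDerivAt ha.le (hg2.differentiableOn two_ne_zero) hga hgD.continuousOn C.2 hgC
      hφ hpos ht
    exact (h.add ((hasDerivAt_id t).const_mul (g 0))).congr_deriv (by simp)
  have hPhi : ∀ t > (0:ℝ), 0 < Phi φ a t := fun t ht => by
    obtain ⟨m, hm0, hm⟩ := hpos t ht
    refine (mul_pos hm0 ha).trans_le (slice_lower (f := fun x => φ x t) ?_
      (fun x hx => hm x hx t ⟨ht.le, le_rfl⟩) ha.le)
    exact hφ.1.continuousOn.comp (f := fun x => (x, t)) (by fun_prop) fun x hx => ⟨hx, ht.le⟩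
  -- The linear extrapolation of `Φ(a, ·)` from time `1` vanishes at this time.
  set T : ℝ := 1 + Phi φ a 1 / g 0 with hT
  have hT0 : 0 < T := by have := hPhi 1 one_pos; positivity
  have hconst := isOpen_Ioi.is_const_of_deriv_eq_zero (isPreconnected_Ioi (a := (0:ℝ)))
    (fun t ht => (hder t ht).differentiableAt.differentiableWithinAt)
    (fun t ht => (hder t ht).deriv) (mem_Ioi.2 hT0) (mem_Ioi.2 one_pos)
  have h1 : g 0 * T = g 0 + Phi φ a 1 := by rw [hT]; field_simp
  have h2 := hPhi T hT0
  linarith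
end

section
/- Let (φ₀, g) be admissible data for the flow-map equation. Then there exists T > 0 and a unique solution φ ∈ C¹(ℝ⁺ × [0,T]) of the flow-map equation with data (φ₀, g); moreover this solution satisfies inf_{(x,t) ∈ ℝ⁺×[0,T]} φ(x,t) > 0. -/
/-!
Fix `a > 0` with `g' = 0` on `[a, ∞)`. A solution does not move at `x ≥ a`, so the equation is an
autonomous ODE for the restriction of `φ(·, t)` to `[0, a]`, in the Banach space `C([0, a])`.
Because `g'(0) = 0` and `g'` is `C¹`, one has `g'(z) = z h(z)` with `h` continuous on `[0, a]`
(`exists_factor`), and `Φ(z, t) = z · avg φ z` with `avg φ z = ∫₀¹ φ(θz, t) dθ`. The singularity at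
`z = 0` cancels: `g' / Φ = h / avg φ`, and the right-hand side is
`φ · ∫ₓᵃ h / avg φ` (`integral_Ioi_eq`). Truncating the denominator from below at some `μ > 0`
makes this vector field (`field`) defined everywhere and Lipschitz on balls
(`lipschitzOnWith_field`).

Uniqueness: two solutions bounded below by positive constants are both integral curves of the field
truncated at a common lower bound (`exists_curve`), hence coincide by Grönwall's inequality.

Existence: Picard–Lindelöf yields an integral curve in `C([0, a])`. Setting
`L(x, t) = ∫₀ᵗ ∫ₓᵃ h / avg φ`, the function `φ₀ exp L` is a solution on all of `ℝ⁺`; it is `C¹`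
since both partial derivatives of `L` are continuous (`contDiff_double_integral`), and for a short
time `L ≥ -1/2`, which keeps `φ` above the truncation level.
-/

open Set MeasureTheory Filter Topology

namespace FlowMap

/-! ### The vector field on `C([0, a])` -/

/-- The constant extension to `ℝ` of a function on `[0, a]`; it keeps all integrands below
globally continuous. -/
noncomputable def ext {a : ℝ} (ha : 0 ≤ a) (φ : C(Icc (0:ℝ) a, ℝ)) (z : ℝ) : ℝ :=
  φ (projIcc 0 a ha z)

/-- The mean value `∫₀¹ φ(θz) dθ`, which equals `Φ(z) / z` for `0 < z ≤ a` and `φ(0)` for `z = 0`. -/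
noncomputable def avg {a : ℝ} (ha : 0 ≤ a) (φ : C(Icc (0:ℝ) a, ℝ)) (z : ℝ) : ℝ :=
  ∫ θ in (0:ℝ)..1, ext ha φ (θ * z)

variable {a : ℝ} (ha : 0 ≤ a)

lemma continuous_ext (φ : C(Icc (0:ℝ) a, ℝ)) : Continuous (ext ha φ) :=
  φ.continuous.comp continuous_projIcc

lemma ext_of_mem (φ : C(Icc (0:ℝ) a, ℝ)) {z : ℝ} (hz : z ∈ Icc 0 a) :
    ext ha φ z = φ ⟨z, hz⟩ := by
  rw [ext, projIcc_of_mem ha hz]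

lemma abs_ext_le (φ : C(Icc (0:ℝ) a, ℝ)) (z : ℝ) : |ext ha φ z| ≤ ‖φ‖ :=
  φ.norm_coe_le_norm _

lemma continuous_avg (φ : C(Icc (0:ℝ) a, ℝ)) : Continuous (avg ha φ) := by
  apply intervalIntegral.continuous_parametric_intervalIntegral_of_continuous'
  exact (continuous_ext ha φ).comp (continuous_snd.mul continuous_fst)

lemma intervalIntegrable_ext_mul (φ : C(Icc (0:ℝ) a, ℝ)) (z : ℝ) :
    IntervalIntegrable (fun θ => ext ha φ (θ * z)) volume 0 1 :=
  ((continuous_ext ha φ).comp (continuous_id.mul continuous_const)).intervalIntegrable _ _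

lemma abs_avg_sub_le (φ ψ : C(Icc (0:ℝ) a, ℝ)) (z : ℝ) :
    |avg ha φ z - avg ha ψ z| ≤ ‖φ - ψ‖ := by
  rw [avg, avg, ← intervalIntegral.integral_sub (intervalIntegrable_ext_mul ha φ z)
    (intervalIntegrable_ext_mul ha ψ z)]
  have := intervalIntegral.norm_integral_le_of_norm_le_const (a := 0) (b := 1) (C := ‖φ - ψ‖)
    (f := fun θ => ext ha φ (θ * z) - ext ha ψ (θ * z))
    (fun θ _ => abs_ext_le ha (φ - ψ) (θ * z))
  simpa using this

lemma le_avg {φ : C(Icc (0:ℝ) a, ℝ)} {m : ℝ} (hm : ∀ x, m ≤ φ x) (z : ℝ) : m ≤ avg ha φ z := by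
  have := intervalIntegral.integral_mono_on (a := 0) (b := 1) zero_le_one
    (intervalIntegrable_const (c := m)) (intervalIntegrable_ext_mul ha φ z)
    (fun θ _ => hm _)
  simpa [avg] using this

/-- The quotient `h / avg φ`, with the denominator truncated from below at `μ > 0` so that it is
defined for every `φ`. With `g'(z) = z h(z)` it is `g' / Φ` as soon as `φ ≥ μ`. -/
noncomputable def quot {μ : ℝ} (hμ : 0 < μ) (h φ : C(Icc (0:ℝ) a, ℝ)) : C(Icc (0:ℝ) a, ℝ) where
  toFun z := h z / max μ (avg ha φ z)
  continuous_toFun := by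
    refine h.continuous.div (continuous_const.max ((continuous_avg ha φ).comp
      continuous_subtype_val)) fun z => ?_
    exact (lt_max_of_lt_left hμ).ne'

/-- The primitive `x ↦ ∫ₓᵃ f` as a function on `[0, a]`. -/
noncomputable def prim (f : C(Icc (0:ℝ) a, ℝ)) : C(Icc (0:ℝ) a, ℝ) where
  toFun x := ∫ z in (x:ℝ)..a, ext ha f z
  continuous_toFun := by
    simp_rw [intervalIntegral.integral_symm a]
    exact ((intervalIntegral.continuous_primitive
      (fun _ _ => (continuous_ext ha f).intervalIntegrable _ _) a).comp
      continuous_subtype_val).neg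

/-- The vector field of the flow-map equation on `C([0, a])`. -/
noncomputable def field {μ : ℝ} (hμ : 0 < μ) (h φ : C(Icc (0:ℝ) a, ℝ)) : C(Icc (0:ℝ) a, ℝ) :=
  φ * prim ha (quot ha hμ h φ)

variable {μ : ℝ} (hμ : 0 < μ) (h : C(Icc (0:ℝ) a, ℝ))

lemma norm_quot_le (φ : C(Icc (0:ℝ) a, ℝ)) : ‖quot ha hμ h φ‖ ≤ ‖h‖ / μ := by
  refine (ContinuousMap.norm_le _ (by positivity)).2 fun z => ?_
  change ‖h z / max μ (avg ha φ z)‖ ≤ _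
  rw [norm_div, Real.norm_of_nonneg (hμ.le.trans (le_max_left _ _))]
  exact div_le_div₀ (norm_nonneg _) (h.norm_coe_le_norm z) hμ (le_max_left _ _)

lemma norm_quot_sub_le (φ ψ : C(Icc (0:ℝ) a, ℝ)) :
    ‖quot ha hμ h φ - quot ha hμ h ψ‖ ≤ ‖h‖ / μ ^ 2 * ‖φ - ψ‖ := by
  refine (ContinuousMap.norm_le _ (by positivity)).2 fun z => ?_
  change ‖h z / max μ (avg ha φ z) - h z / max μ (avg ha ψ z)‖ ≤ _
  have h1 : μ ≤ max μ (avg ha φ z) := le_max_left _ _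
  have h2 : μ ≤ max μ (avg ha ψ z) := le_max_left _ _
  have h3 : |max μ (avg ha ψ z) - max μ (avg ha φ z)| ≤ ‖φ - ψ‖ := by
    refine (abs_max_sub_max_le_max _ _ _ _).trans ?_
    rw [sub_self, abs_zero, abs_sub_comm]
    exact max_le (norm_nonneg _) (abs_avg_sub_le ha φ ψ z)
  generalize max μ (avg ha φ z) = p at *
  generalize max μ (avg ha ψ z) = r at *
  have hp : 0 < p := hμ.trans_le h1
  have hr : 0 < r := hμ.trans_le h2
  have : h z / p - h z / r = h z * (r - p) / (p * r) := by field_simp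
  rw [this, norm_div, norm_mul, Real.norm_of_nonneg (mul_pos hp hr).le, div_mul_eq_mul_div]
  refine div_le_div₀ (by positivity) ?_ (by positivity) ?_
  · exact mul_le_mul (h.norm_coe_le_norm z) h3 (norm_nonneg _) (norm_nonneg _)
  · rw [sq]; exact mul_le_mul h1 h2 hμ.le hp.le

lemma abs_integral_ext_le (f : C(Icc (0:ℝ) a, ℝ)) {x : ℝ} (hx : x ∈ Icc 0 a) :
    |∫ z in x..a, ext ha f z| ≤ a * ‖f‖ := by
  have := intervalIntegral.norm_integral_le_of_norm_le_const (a := x) (b := a) (C := ‖f‖)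
    (f := ext ha f) (fun z _ => abs_ext_le ha f z)
  rw [abs_of_nonneg (sub_nonneg.2 hx.2)] at this
  refine this.trans ?_
  have := hx.1
  nlinarith [norm_nonneg f]

lemma norm_prim_le (f : C(Icc (0:ℝ) a, ℝ)) : ‖prim ha f‖ ≤ a * ‖f‖ :=
  (ContinuousMap.norm_le _ (by positivity)).2 fun x => abs_integral_ext_le ha f x.2

lemma prim_sub (f₁ f₂ : C(Icc (0:ℝ) a, ℝ)) : prim ha f₁ - prim ha f₂ = prim ha (f₁ - f₂) := by
  ext x
  exact (intervalIntegral.integral_sub ((continuous_ext ha f₁).intervalIntegrable _ _)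
    ((continuous_ext ha f₂).intervalIntegrable _ _)).symm

lemma norm_prim_quot_le (φ : C(Icc (0:ℝ) a, ℝ)) :
    ‖prim ha (quot ha hμ h φ)‖ ≤ a * (‖h‖ / μ) :=
  (norm_prim_le ha _).trans (by gcongr; exact norm_quot_le ha hμ h φ)

lemma norm_field_le (φ : C(Icc (0:ℝ) a, ℝ)) :
    ‖field ha hμ h φ‖ ≤ ‖φ‖ * (a * (‖h‖ / μ)) :=
  (norm_mul_le _ _).trans (by gcongr; exact norm_prim_quot_le ha hμ h φ)

/-- A Lipschitz constant of the vector field on the ball of radius `M` about `0`. -/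
noncomputable def lipConst (a μ H M : ℝ) : NNReal :=
  Real.toNNReal (a * (H / μ) + M * (a * (H / μ ^ 2)))

lemma lipschitzOnWith_field {M : ℝ} :
    LipschitzOnWith (lipConst a μ ‖h‖ M) (field ha hμ h) {φ | ‖φ‖ ≤ M} := by
  refine LipschitzOnWith.of_dist_le_mul fun φ hφ ψ hψ => ?_
  have hM : 0 ≤ M := (norm_nonneg _).trans hφ
  rw [dist_eq_norm, dist_eq_norm, lipConst, Real.coe_toNNReal _ (by positivity)]
  have e : field ha hμ h φ - field ha hμ h ψ = (φ - ψ) * prim ha (quot ha hμ h φ)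
      + ψ * prim ha (quot ha hμ h φ - quot ha hμ h ψ) := by
    rw [← prim_sub, field, field]; ring
  rw [e]
  calc _ ≤ ‖φ - ψ‖ * (a * (‖h‖ / μ)) + M * (a * (‖h‖ / μ ^ 2 * ‖φ - ψ‖)) := by
        refine (norm_add_le _ _).trans (add_le_add ?_ ?_)
        · exact (norm_mul_le _ _).trans (by gcongr; exact norm_prim_quot_le ha hμ h φ)
        · refine (norm_mul_le _ _).trans (mul_le_mul hψ ?_ (norm_nonneg _) hM)
          exact (norm_prim_le ha _).trans (by gcongr; exact norm_quot_sub_le ha hμ h φ ψ)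
    _ = _ := by ring

lemma continuous_quot : Continuous (quot ha hμ h) :=
  (LipschitzWith.of_dist_le_mul (K := Real.toNNReal (‖h‖ / μ ^ 2)) fun φ ψ => by
    rw [dist_eq_norm, dist_eq_norm, Real.coe_toNNReal _ (by positivity)]
    exact norm_quot_sub_le ha hμ h φ ψ).continuous

lemma continuous_prim : Continuous (prim ha) :=
  (LipschitzWith.of_dist_le_mul (K := Real.toNNReal a) fun φ ψ => by
    rw [dist_eq_norm, dist_eq_norm, Real.coe_toNNReal _ ha, prim_sub]
    exact norm_prim_le ha _).continuous

lemma continuous_field : Continuous (field ha hμ h) :=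
  continuous_id.mul ((continuous_prim ha).comp (continuous_quot ha hμ h))

lemma mul_avg (φ : C(Icc (0:ℝ) a, ℝ)) (z : ℝ) :
    z * avg ha φ z = ∫ σ in (0:ℝ)..z, ext ha φ σ := by
  simp [avg]

/-- Since `g'` vanishes beyond `a`, so does `h(a)`, hence the constant extension of the quotient
vanishes beyond `a` too. -/
lemma ext_quot_eq_zero {G : ℝ → ℝ} (ha0 : 0 < a)
    (hG : ∀ z : Icc (0:ℝ) a, G z = z * h z) (hG0 : ∀ z ≥ a, G z = 0)
    (φ : C(Icc (0:ℝ) a, ℝ)) {z : ℝ} (hz : a ≤ z) : ext ha (quot ha hμ h φ) z = 0 := by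
  have h1 : h ⟨a, ha, le_rfl⟩ = 0 := by
    have h2 := hG ⟨a, ha, le_rfl⟩
    rw [hG0 _ le_rfl, eq_comm, mul_eq_zero] at h2
    exact h2.resolve_left ha0.ne'
  rw [ext, projIcc_of_right_le ha hz]
  change h ⟨a, ha, le_rfl⟩ / _ = 0
  rw [h1, zero_div]

lemma integral_ext_quot_eq_zero {G : ℝ → ℝ} (ha0 : 0 < a)
    (hG : ∀ z : Icc (0:ℝ) a, G z = z * h z) (hG0 : ∀ z ≥ a, G z = 0)
    (φ : C(Icc (0:ℝ) a, ℝ)) {x : ℝ} (hx : a ≤ x) :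
    ∫ z in x..a, ext ha (quot ha hμ h φ) z = 0 := by
  rw [intervalIntegral.integral_symm, intervalIntegral.integral_zero_ae, neg_zero]
  refine Eventually.of_forall fun z hz => ext_quot_eq_zero ha hμ h ha0 hG hG0 φ ?_
  rw [uIoc_of_le hx] at hz
  exact hz.1.le

/-- The nonlocal term of the flow-map equation, computed from the restriction `φ` of the solution
to `[0, a]`. -/
lemma integral_Ioi_eq {G f : ℝ → ℝ} {φ : C(Icc (0:ℝ) a, ℝ)} (ha0 : 0 < a)
    (hG : ∀ z : Icc (0:ℝ) a, G z = z * h z) (hG0 : ∀ z ≥ a, G z = 0)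
    (hf : ∀ z : Icc (0:ℝ) a, f z = φ z) (hφ : ∀ z, μ ≤ φ z) {x : ℝ} (hx : 0 ≤ x) :
    ∫ z in Ioi x, G z / (∫ σ in (0:ℝ)..z, f σ) = ∫ z in x..a, ext ha (quot ha hμ h φ) z := by
  have hzero : ∀ z, a ≤ z → ext ha (quot ha hμ h φ) z = 0 :=
    fun z hz => ext_quot_eq_zero ha hμ h ha0 hG hG0 φ hz
  have key : ∀ z, 0 < z → G z / (∫ σ in (0:ℝ)..z, f σ) = ext ha (quot ha hμ h φ) z := by
    intro z hz
    rcases le_total z a with hza | hza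
    · have e1 : ∫ σ in (0:ℝ)..z, f σ = z * avg ha φ z := by
        rw [mul_avg]
        refine intervalIntegral.integral_congr fun σ hσ => ?_
        rw [uIcc_of_le hz.le] at hσ
        have hσ' : σ ∈ Icc 0 a := ⟨hσ.1, hσ.2.trans hza⟩
        rw [ext_of_mem ha φ hσ']
        exact hf ⟨σ, hσ'⟩
      have hz' : z ∈ Icc 0 a := ⟨hz.le, hza⟩
      rw [e1, ext_of_mem ha _ hz', hG ⟨z, hz'⟩]
      change _ = h ⟨z, hz'⟩ / max μ (avg ha φ z)
      rw [max_eq_right (le_avg ha hφ z), mul_div_mul_left _ _ hz.ne']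
    · rw [hG0 z hza, hzero z hza, zero_div]
  rw [setIntegral_congr_fun measurableSet_Ioi fun z hz => key z (hx.trans_lt hz)]
  rcases le_total x a with hxa | hxa
  · rw [intervalIntegral.integral_of_le hxa]
    refine setIntegral_eq_of_subset_of_forall_sdiff_eq_zero measurableSet_Ioi
      Ioc_subset_Ioi_self fun z hz => hzero z ?_
    by_contra! hlt
    exact hz.2 ⟨hz.1, hlt.le⟩
  · rw [integral_ext_quot_eq_zero ha hμ h ha0 hG hG0 φ hxa]
    exact setIntegral_eq_zero_of_forall_eq_zero fun z hz => hzero z (hxa.trans (le_of_lt hz))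

/-! ### Uniqueness -/

/-- A continuous curve in `C(X)` solving an autonomous equation pointwise in `X` solves it in the
Banach space `C(X)`: it agrees with the primitive of the continuous curve `F ∘ u`. -/
lemma hasDerivWithinAt_of_pointwise {X : Type*} [TopologicalSpace X] [CompactSpace X]
    {T : ℝ} {u : ℝ → C(X, ℝ)} {F : C(X, ℝ) → C(X, ℝ)} (hF : Continuous F)
    (hu : Continuous u)
    (hp : ∀ x, ∀ t ∈ Icc 0 T, HasDerivWithinAt (fun s => u s x) (F (u t) x) (Icc 0 T) t) :
    ∀ t ∈ Icc 0 T, HasDerivWithinAt u (F (u t)) (Icc 0 T) t := by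
  have hv : Continuous fun s => F (u s) := hF.comp hu
  have key : ∀ t ∈ Icc 0 T, u t = u 0 + ∫ s in (0:ℝ)..t, F (u s) := by
    intro t ht
    ext x
    have e1 := (ContinuousMap.evalCLM ℝ x).intervalIntegral_comp_comm
      (hv.intervalIntegrable 0 t (μ := volume))
    have e2 : ∫ s in (0:ℝ)..t, F (u s) x = u t x - u 0 x := by
      refine intervalIntegral.integral_eq_sub_of_hasDeriv_right_of_le (f := fun s => u s x)
        ht.1 ?_ ?_ ?_
      · exact ((ContinuousMap.evalCLM ℝ x).continuous.comp hu).continuousOn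
      · intro s hs
        exact ((hp x s ⟨hs.1.le, hs.2.le.trans ht.2⟩).mono_of_mem_nhdsWithin
          (Icc_mem_nhdsGT_of_mem ⟨hs.1.le, hs.2.trans_le ht.2⟩))
      · exact ((ContinuousMap.evalCLM ℝ x).continuous.comp hv).intervalIntegrable _ _
    have e3 : (∫ s in (0:ℝ)..t, F (u s)) x = u t x - u 0 x := by
      rw [← e2]; exact e1.symm
    rw [ContinuousMap.add_apply, e3]; ring
  intro t ht
  have hd := ((hv.integral_hasStrictDerivAt 0 t).hasDerivAt.const_add (u 0)).hasDerivWithinAt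
    (s := Icc 0 T)
  exact hd.congr key (key t ht)

section Solution

variable {φ₀ g : ℝ → ℝ} (ha0 : 0 < a) (hG : ∀ z : Icc (0:ℝ) a, gD g z = z * h z)
  (hG0 : ∀ z ≥ a, gD g z = 0) {T : ℝ} (hT : 0 ≤ T)

include ha0 hG hG0 hT in
/-- The restriction to `[0, a]` of a solution bounded below by `μ` is an integral curve of the
vector field in `C([0, a])`. -/
lemma exists_curve {ψ : ℝ → ℝ → ℝ} (hψ : IsFlowMapSolution φ₀ g ψ (Icc 0 T))
    (hψμ : ∀ x ≥ (0:ℝ), ∀ t ∈ Icc 0 T, μ ≤ ψ x t) :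
    ∃ u : ℝ → C(Icc (0:ℝ) a, ℝ), Continuous u ∧ (∀ t ∈ Icc 0 T, ∀ x, u t x = ψ x t) ∧
      ∀ t ∈ Icc 0 T, HasDerivWithinAt u (field ha hμ h (u t)) (Icc 0 T) t := by
  have hc : Continuous fun p : ℝ × Icc (0:ℝ) a => ψ p.2 (projIcc 0 T hT p.1) :=
    hψ.1.continuousOn.comp_continuous (f := fun p : ℝ × Icc (0:ℝ) a =>
      ((p.2 : ℝ), (projIcc 0 T hT p.1 : ℝ))) (by fun_prop)
      fun p => ⟨p.2.2.1, (projIcc 0 T hT p.1).2⟩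
  let u : ℝ → C(Icc (0:ℝ) a, ℝ) := fun t =>
    ⟨fun x => ψ x (projIcc 0 T hT t), hc.comp (Continuous.prodMk_right t)⟩
  have huc : Continuous u := ContinuousMap.continuous_of_continuous_uncurry u hc
  have hu : ∀ t ∈ Icc 0 T, ∀ x, u t x = ψ x t := by
    intro t ht x
    change ψ x (projIcc 0 T hT t) = _
    rw [projIcc_of_mem hT ht]
  refine ⟨u, huc, hu, hasDerivWithinAt_of_pointwise (continuous_field ha hμ h) huc ?_⟩
  intro x t ht
  have hd := hψ.2.2 x x.2.1 t ht
  have e : ∫ z in Ioi (x:ℝ), gD g z / Phi ψ z t = prim ha (quot ha hμ h (u t)) x :=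
    integral_Ioi_eq ha hμ h (f := fun σ => ψ σ t) ha0 hG hG0 (fun z => (hu t ht z).symm)
      (fun z => hψμ z z.2.1 _ (projIcc 0 T hT t).2) x.2.1
  rw [e, ← hu t ht] at hd
  exact hd.congr (fun s hs => hu s hs x) (hu t ht x)

include ha0 hG0 in
/-- Beyond the support of `g'` a solution does not move. -/
lemma eq_initial {ψ : ℝ → ℝ → ℝ} (hψ : IsFlowMapSolution φ₀ g ψ (Icc 0 T)) {x : ℝ} (hx : a ≤ x)
    {t : ℝ} (ht : t ∈ Icc 0 T) : ψ x t = φ₀ x := by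
  have hx0 : 0 ≤ x := ha0.le.trans hx
  rw [← hψ.2.1 x hx0]
  have hz : ∀ s, ∫ z in Ioi x, gD g z / Phi ψ z s = 0 := fun s =>
    setIntegral_eq_zero_of_forall_eq_zero fun z hz => by
      rw [hG0 z (hx.trans (le_of_lt hz)), zero_div]
  have hd : ∀ s ∈ Icc 0 T, HasDerivWithinAt (fun s => ψ x s) 0 (Icc 0 T) s := by
    intro s hs
    simpa [hz] using hψ.2.2 x hx0 s hs
  refine constant_of_has_deriv_right_zero (f := fun s => ψ x s)
    (fun s hs => (hd s hs).continuousWithinAt) (fun s hs => ?_) t ht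
  exact (hd s ⟨hs.1, hs.2.le⟩).mono_of_mem_nhdsWithin (Icc_mem_nhdsGE_of_mem hs)

include ha0 hG hG0 hT in
lemma solution_unique {ψ₁ ψ₂ : ℝ → ℝ → ℝ} (h₁ : IsFlowMapSolution φ₀ g ψ₁ (Icc 0 T))
    (h₂ : IsFlowMapSolution φ₀ g ψ₂ (Icc 0 T)) (p₁ : PosInfOn ψ₁ (Icc 0 T))
    (p₂ : PosInfOn ψ₂ (Icc 0 T)) : ∀ x ≥ (0:ℝ), ∀ t ∈ Icc 0 T, ψ₁ x t = ψ₂ x t := by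
  obtain ⟨m₁, hm₁, b₁⟩ := p₁
  obtain ⟨m₂, hm₂, b₂⟩ := p₂
  have hm : 0 < min m₁ m₂ := lt_min hm₁ hm₂
  obtain ⟨u₁, c₁, e₁, d₁⟩ := exists_curve ha0.le hm h ha0 hG hG0 hT h₁
    fun x hx t ht => (min_le_left _ _).trans (b₁ x hx t ht)
  obtain ⟨u₂, c₂, e₂, d₂⟩ := exists_curve ha0.le hm h ha0 hG hG0 hT h₂
    fun x hx t ht => (min_le_right _ _).trans (b₂ x hx t ht)
  obtain ⟨M₁, hM₁⟩ := isCompact_Icc.exists_bound_of_continuousOn (c₁.continuousOn (s := Icc 0 T))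
  obtain ⟨M₂, hM₂⟩ := isCompact_Icc.exists_bound_of_continuousOn (c₂.continuousOn (s := Icc 0 T))
  have hu : EqOn u₁ u₂ (Icc 0 T) := by
    refine ODE_solution_unique_of_mem_Icc_right (v := fun _ => field ha0.le hm h)
      (s := fun _ => {φ | ‖φ‖ ≤ max M₁ M₂}) (fun _ _ => lipschitzOnWith_field ha0.le hm h)
      c₁.continuousOn (fun t ht => ?_) (fun t ht => ?_)
      c₂.continuousOn (fun t ht => ?_) (fun t ht => ?_) ?_
    · exact (d₁ t ⟨ht.1, ht.2.le⟩).mono_of_mem_nhdsWithin (Icc_mem_nhdsGE_of_mem ht)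
    · exact (hM₁ t ⟨ht.1, ht.2.le⟩).trans (le_max_left _ _)
    · exact (d₂ t ⟨ht.1, ht.2.le⟩).mono_of_mem_nhdsWithin (Icc_mem_nhdsGE_of_mem ht)
    · exact (hM₂ t ⟨ht.1, ht.2.le⟩).trans (le_max_right _ _)
    · ext x
      rw [e₁ 0 ⟨le_rfl, hT⟩, e₂ 0 ⟨le_rfl, hT⟩, h₁.2.1 x x.2.1, h₂.2.1 x x.2.1]
  intro x hx t ht
  rcases le_total x a with hxa | hxa
  · rw [← e₁ t ht ⟨x, hx, hxa⟩, ← e₂ t ht ⟨x, hx, hxa⟩, hu ht]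
  · rw [eq_initial ha0 hG0 h₁ hxa ht, eq_initial ha0 hG0 h₂ hxa ht]

end Solution

/-! ### Existence -/

/-- Double primitives of a jointly continuous function are `C¹`: both partial derivatives are
continuous. -/
lemma contDiff_double_integral {q : ℝ → ℝ → ℝ} (hq : Continuous (Function.uncurry q)) (b : ℝ) :
    ContDiff ℝ 1 (fun p : ℝ × ℝ => ∫ s in (0:ℝ)..p.2, ∫ z in p.1..b, q z s) := by
  have hk : Continuous fun p : ℝ × ℝ => ∫ z in p.1..b, q z p.2 := by
    simp_rw [intervalIntegral.integral_symm b]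
    refine (intervalIntegral.continuous_parametric_intervalIntegral_of_continuous
      (f := fun (p : ℝ × ℝ) z => q z p.2) ?_ continuous_fst).neg
    exact hq.comp (by fun_prop : Continuous fun r : (ℝ × ℝ) × ℝ => (r.2, r.1.2))
  have hl : Continuous fun p : ℝ × ℝ => ∫ s in (0:ℝ)..p.2, q p.1 s := by
    refine intervalIntegral.continuous_parametric_intervalIntegral_of_continuous
      (f := fun (p : ℝ × ℝ) s => q p.1 s) ?_ continuous_snd
    exact hq.comp (by fun_prop : Continuous fun r : (ℝ × ℝ) × ℝ => (r.1.1, r.2))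
  let f : ℝ → ℝ → ℝ := fun x t => ∫ s in (0:ℝ)..t, ∫ z in x..b, q z s
  let f₁ : ℝ → ℝ → ℝ →L[ℝ] ℝ := fun x t =>
    ContinuousLinearMap.toSpanSingleton ℝ (-∫ s in (0:ℝ)..t, q x s)
  let f₂ : ℝ → ℝ → ℝ →L[ℝ] ℝ := fun x t =>
    ContinuousLinearMap.toSpanSingleton ℝ (∫ z in x..b, q z t)
  have c₁ : Continuous ↿f₁ :=
    (ContinuousLinearMap.toSpanSingletonCLE (𝕜 := ℝ) (E := ℝ)).continuous.comp hl.neg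
  have c₂ : Continuous ↿f₂ :=
    (ContinuousLinearMap.toSpanSingletonCLE (𝕜 := ℝ) (E := ℝ)).continuous.comp hk
  have d₁ : ∀ v : ℝ × ℝ, HasFDerivAt (f · v.2) (↿f₁ v) v.1 := by
    rintro ⟨x, t⟩
    -- Fubini turns `f` into a primitive in `x`.
    have e : (f · t) = fun x => -∫ z in b..x, ∫ s in (0:ℝ)..t, q z s := by
      ext y
      rw [← intervalIntegral.integral_symm]
      refine intervalIntegral_intervalIntegral_swap (F := fun s z => q z s) ?_
      exact ((hq.comp continuous_swap).continuousOn.integrableOn_compact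
        (isCompact_uIcc.prod isCompact_uIcc)).mono_set
          (prod_mono uIoc_subset_uIcc uIoc_subset_uIcc)
    have hc : Continuous fun z => ∫ s in (0:ℝ)..t, q z s :=
      hl.comp (Continuous.prodMk_left t)
    change HasDerivAt (f · t) _ x
    rw [e]
    exact (hc.integral_hasStrictDerivAt b x).hasDerivAt.neg
  have d₂ : ∀ v : ℝ × ℝ, HasFDerivAt (f v.1 ·) (↿f₂ v) v.2 := by
    rintro ⟨x, t⟩
    have hc : Continuous fun s => ∫ z in x..b, q z s := hk.comp (Continuous.prodMk_right x)
    exact (hc.integral_hasStrictDerivAt 0 t).hasDerivAt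
  refine contDiff_one_iff_hasFDerivAt.2
    ⟨fun u => (↿f₁ u).coprod (↿f₂ u), ?_, fun u => ?_⟩
  · exact (ContinuousLinearMap.coprodEquivL ℝ).continuous.comp (c₁.prodMk c₂)
  · exact (hasStrictFDerivAt_uncurry_coprod (Eventually.of_forall d₁) (Eventually.of_forall d₂)
      c₁.continuousAt c₂.continuousAt).hasFDerivAt

/-- Picard–Lindelöf for the truncated vector field, on an interval so short that the growth
exponent of the solution stays below `1 / 2`. -/
lemma exists_integral_curve (v₀ : C(Icc (0:ℝ) a, ℝ)) :
    ∃ T : ℝ, 0 < T ∧ a * (‖h‖ / μ) * T ≤ 1 / 2 ∧ ∃ u : ℝ → C(Icc (0:ℝ) a, ℝ), u 0 = v₀ ∧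
      ∀ t ∈ Icc 0 T, HasDerivWithinAt u (field ha hμ h (u t)) (Icc 0 T) t := by
  set B := a * (‖h‖ / μ) with hB
  have hB0 : 0 ≤ B := by positivity
  set M := ‖v₀‖ + 1 with hM
  have hM1 : 1 ≤ M := by simp [hM]
  have hMB : 0 ≤ M * B := by positivity
  have hBM : B ≤ M * B := le_mul_of_one_le_left hB0 hM1
  set T : ℝ := 1 / (2 * (M * B + 1)) with hTdef
  have hT : 0 < T := by positivity
  have hMT : M * B * T ≤ 1 / 2 := by
    rw [hTdef, mul_one_div, div_le_div_iff₀ (by positivity) (by norm_num)]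
    linarith
  have hball : ∀ φ ∈ Metric.closedBall v₀ ((1 : NNReal) : ℝ), ‖φ‖ ≤ M := by
    intro φ hφ
    rw [mem_closedBall_iff_norm, NNReal.coe_one] at hφ
    have := norm_le_norm_add_norm_sub' φ v₀
    linarith
  refine ⟨T, hT, ?_, ?_⟩
  · exact (mul_le_mul_of_nonneg_right hBM hT.le).trans hMT
  · have pl : IsPicardLindelof (fun _ => field ha hμ h) (tmin := 0) (tmax := T)
        ⟨0, le_rfl, hT.le⟩ v₀ 1 0 (Real.toNNReal (M * B)) (lipConst a μ ‖h‖ M) := by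
      refine IsPicardLindelof.of_time_independent (fun φ hφ => ?_)
        ((lipschitzOnWith_field ha hμ h).mono hball) ?_
      · rw [Real.coe_toNNReal _ hMB]
        exact (norm_field_le ha hμ h φ).trans (mul_le_mul_of_nonneg_right (hball φ hφ) hB0)
      · rw [Real.coe_toNNReal _ hMB]
        simp only [sub_zero, sub_self, max_eq_left hT.le, NNReal.coe_one, NNReal.coe_zero]
        linarith
    exact pl.exists_eq_forall_mem_Icc_hasDerivWithinAt₀

include ha hμ in
/-- Local existence. The curve `u` in `C([0, a])` determines the growth exponent
`L(x, t) = ∫₀ᵗ ∫ₓᵃ h / avg u`, which makes sense for all `x ≥ 0`, and `φ = φ₀ exp L` is a `C¹`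
extension of `u` to `ℝ⁺`. Since `L ≥ -1/2`, the bound `φ ≥ μ` holds and the truncation
in the vector field is never active. -/
lemma exists_solution {φ₀ g : ℝ → ℝ} (ha0 : 0 < a) (hG : ∀ z : Icc (0:ℝ) a, gD g z = z * h z)
    (hG0 : ∀ z ≥ a, gD g z = 0) (hφ₀ : ContDiffOn ℝ 1 φ₀ (Ici 0))
    (hm : ∀ x ≥ (0:ℝ), 2 * μ ≤ φ₀ x) :
    ∃ T : ℝ, 0 < T ∧ ∃ φ : ℝ → ℝ → ℝ, IsFlowMapSolution φ₀ g φ (Icc 0 T) ∧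
      PosInfOn φ (Icc 0 T) := by
  let v₀ : C(Icc (0:ℝ) a, ℝ) := ⟨fun x => φ₀ x,
    hφ₀.continuousOn.comp_continuous continuous_subtype_val fun x => x.2.1⟩
  obtain ⟨T, hT, hBT, u, hu0, hu⟩ := exists_integral_curve ha hμ h v₀
  have huc : Continuous fun s => u (projIcc 0 T hT.le s) :=
    (HasDerivWithinAt.continuousOn hu).comp_continuous (by fun_prop)
      fun s => (projIcc 0 T hT.le s).2
  let q : ℝ → ℝ → ℝ := fun z s => ext ha (quot ha hμ h (u (projIcc 0 T hT.le s))) z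
  have hq : Continuous (Function.uncurry q) := by
    have h1 : Continuous fun p : ℝ × ℝ => quot ha hμ h (u (projIcc 0 T hT.le p.2)) :=
      (continuous_quot ha hμ h).comp (huc.comp continuous_snd)
    exact h1.eval (continuous_projIcc.comp continuous_fst)
  let k : ℝ → ℝ → ℝ := fun x s => ∫ z in x..a, q z s
  let L : ℝ → ℝ → ℝ := fun x t => ∫ s in (0:ℝ)..t, k x s
  have hL : ContDiff ℝ 1 (fun p : ℝ × ℝ => L p.1 p.2) := contDiff_double_integral hq a
  have hk : ∀ x, Continuous (k x) := fun x =>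
    intervalIntegral.continuous_parametric_intervalIntegral_of_continuous'
      (f := fun s z => q z s) (hq.comp continuous_swap) x a
  have hLd : ∀ x t, HasDerivAt (L x) (k x t) t := fun x t =>
    ((hk x).integral_hasStrictDerivAt 0 t).hasDerivAt
  have hL0 : ∀ x, L x 0 = 0 := fun x => intervalIntegral.integral_same
  have hkB : ∀ x, 0 ≤ x → ∀ s, |k x s| ≤ a * (‖h‖ / μ) := by
    intro x hx s
    rcases le_total x a with hxa | hxa
    · exact (abs_integral_ext_le ha _ ⟨hx, hxa⟩).trans (by gcongr; exact norm_quot_le ha hμ h _)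
    · have : k x s = 0 := integral_ext_quot_eq_zero ha hμ h ha0 hG hG0 _ hxa
      rw [this, abs_zero]; positivity
  have hLB : ∀ x, 0 ≤ x → ∀ t ∈ Icc 0 T, -(1 / 2) ≤ L x t := by
    intro x hx t ht
    have h1 := intervalIntegral.norm_integral_le_of_norm_le_const (a := 0) (b := t)
      (f := k x) (fun s _ => hkB x hx s)
    rw [sub_zero, abs_of_nonneg ht.1] at h1
    have h2 : a * (‖h‖ / μ) * t ≤ a * (‖h‖ / μ) * T := by gcongr; exact ht.2
    exact (abs_le.1 (h1.trans (h2.trans hBT))).1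
  let φ : ℝ → ℝ → ℝ := fun x t => φ₀ x * Real.exp (L x t)
  have hφμ : ∀ x ≥ (0:ℝ), ∀ t ∈ Icc 0 T, μ ≤ φ x t := by
    intro x hx t ht
    have h1 := Real.add_one_le_exp (L x t)
    have h2 := hLB x hx t ht
    have h3 := hm x hx
    have h4 : (1 / 2 : ℝ) ≤ Real.exp (L x t) := by linarith
    calc μ = 2 * μ * (1 / 2) := by ring
      _ ≤ φ₀ x * Real.exp (L x t) := mul_le_mul h3 h4 (by norm_num) (by linarith)
  have hφu : ∀ x : Icc (0:ℝ) a, ∀ t ∈ Icc 0 T, φ x t = u t x := by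
    intro x t ht
    have hd : ∀ s ∈ Icc 0 T, HasDerivWithinAt (fun s => u s x * Real.exp (-L x s)) 0
        (Icc 0 T) s := by
      intro s hs
      have h1 : HasDerivWithinAt (fun s => u s x) (u s x * k x s) (Icc 0 T) s := by
        have h2 := (ContinuousMap.evalCLM ℝ x).hasFDerivAt.comp_hasDerivWithinAt s (hu s hs)
        have h3 : k x s = prim ha (quot ha hμ h (u s)) x := by
          change ∫ z in (x:ℝ)..a, ext ha (quot ha hμ h (u (projIcc 0 T hT.le s))) z = _
          rw [projIcc_of_mem hT.le hs]
          rfl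
        rw [h3]
        exact h2
      have h4 := h1.mul (hLd x s).neg.exp.hasDerivWithinAt
      exact h4.congr_deriv (by ring)
    have hconst := constant_of_has_deriv_right_zero (fun s hs => (hd s hs).continuousWithinAt)
      (fun s hs => (hd s ⟨hs.1, hs.2.le⟩).mono_of_mem_nhdsWithin (Icc_mem_nhdsGE_of_mem hs)) t ht
    simp only [hL0, hu0, neg_zero, Real.exp_zero, mul_one] at hconst
    change φ₀ x * Real.exp (L x t) = _
    have hv : v₀ x = φ₀ x := rfl
    rw [← hv, ← hconst, mul_assoc, ← Real.exp_add, neg_add_cancel, Real.exp_zero, mul_one]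
  refine ⟨T, hT, φ, ⟨?_, ?_, ?_⟩, μ, hμ, hφμ⟩
  · refine ContDiffOn.mul ?_ (hL.exp).contDiffOn
    exact hφ₀.comp contDiff_fst.contDiffOn fun p hp => hp.1
  · intro x _
    simp [φ, hL0]
  · intro x hx t ht
    have e : ∫ z in Ioi x, gD g z / Phi φ z t = k x t := by
      have h1 := integral_Ioi_eq ha hμ h (f := fun σ => φ σ t) (φ := u t) ha0 hG hG0
        (fun z => hφu z t ht) (fun z => hφu z t ht ▸ hφμ z z.2.1 t ht) hx
      refine h1.trans ?_
      simp only [k, q, projIcc_of_mem hT.le ht]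
    rw [e]
    have h1 := ((hLd x t).exp.const_mul (φ₀ x)).hasDerivWithinAt (s := Icc 0 T)
    exact h1.congr_deriv (by simp only [φ]; ring)

/-! ### The factorization `g'(z) = z h(z)` -/

/-- `g'` vanishes to first order at `0`, so `g'(z) = z h(z)` with `h` continuous up to `0`. -/
lemma exists_factor {φ₀ g : ℝ → ℝ} (hadm : AdmissibleData φ₀ g) :
    ∃ a : ℝ, 0 < a ∧ (∀ z ≥ a, gD g z = 0) ∧
      ∃ h : C(Icc (0:ℝ) a, ℝ), ∀ z : Icc (0:ℝ) a, gD g z = z * h z := by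
  obtain ⟨-, hg, ⟨a₀, ha₀⟩, -, hg0⟩ := hadm
  have hgD : ContDiffOn ℝ 1 (gD g) (Ici 0) :=
    hg.derivWithin (uniqueDiffOn_Ici 0) (by norm_num)
  have hd : HasDerivWithinAt (gD g) (derivWithin (gD g) (Ici 0) 0) (Ici 0) 0 :=
    (hgD.differentiableOn one_ne_zero 0 self_mem_Ici).hasDerivWithinAt
  have hpos : 0 < max a₀ 0 + 1 := by positivity
  refine ⟨max a₀ 0 + 1, hpos, fun z hz => ?_, ?_⟩
  · have hlt : a₀ < z := by linarith [le_max_left a₀ 0]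
    have : g =ᶠ[𝓝[Ici 0] z] fun _ => 0 :=
      nhdsWithin_le_nhds (eventually_of_mem (Ioi_mem_nhds hlt) fun y hy => ha₀ y (le_of_lt hy))
    rw [gD, this.derivWithin_eq (ha₀ z hlt.le)]
    simp
  · let H : ℝ → ℝ := Function.update (fun z => gD g z / z) 0 (derivWithin (gD g) (Ici 0) 0)
    have hH : ContinuousOn H (Ici 0) := by
      refine continuousOn_update_iff.2 ⟨?_, fun _ => ?_⟩
      · exact (hgD.continuousOn.mono sdiff_subset).div continuousOn_id fun z hz => hz.2
      · refine (hasDerivWithinAt_iff_tendsto_slope.1 hd).congr fun z => ?_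
        rw [slope_def_field, hg0, sub_zero, sub_zero]
    refine ⟨⟨fun z => H z, hH.comp_continuous continuous_subtype_val fun z => z.2.1⟩, fun z => ?_⟩
    change gD g z = z * H z
    by_cases hz : (z:ℝ) = 0
    · rw [hz, hg0, zero_mul]
    · rw [show H z = gD g z / z from Function.update_of_ne hz _ _]
      field_simp

end FlowMap

/-- local existence and uniqueness for the flow-map equation with
admissible data `(φ₀, g)`; the solution moreover has a positive infimum. -/
theorem statement4 (φ₀ g : ℝ → ℝ) (hadm : AdmissibleData φ₀ g) :
    ∃ T : ℝ, 0 < T ∧ ∃ φ : ℝ → ℝ → ℝ,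
      IsFlowMapSolution φ₀ g φ (Set.Icc 0 T) ∧
      PosInfOn φ (Set.Icc 0 T) ∧
      ∀ ψ : ℝ → ℝ → ℝ, IsFlowMapSolution φ₀ g ψ (Set.Icc 0 T) →
        PosInfOn ψ (Set.Icc 0 T) →
        ∀ x ≥ (0:ℝ), ∀ t ∈ Set.Icc (0:ℝ) T, ψ x t = φ x t := by
  obtain ⟨a, ha, hG0, h, hG⟩ := FlowMap.exists_factor hadm
  obtain ⟨hφ₀, -, -, ⟨m, hm, hb⟩, -⟩ := hadm
  obtain ⟨T, hT, φ, hφ, hpos⟩ := FlowMap.exists_solution ha.le (half_pos hm) h ha hG hG0 hφ₀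
    fun x hx => by linarith [hb x hx]
  exact ⟨T, hT, φ, hφ, hpos, fun ψ hψ hψpos =>
    FlowMap.solution_unique h ha hG hG0 hT.le hψ hφ hψpos hpos⟩
end
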